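/- arXiv:2006.14226 — 3 statements merged into one kernel-verified Lean document; each statement's English description precedes it below -/
import Mathlib

section
/- Let d, q ≥ 1 and let A and Ã be real d × q matrices. Suppose there is a partition I ∪ J = {1, …, d} with I and J nonempty such that every column of A_I, Ã_I, A_J and Ã_J is nonzero, where B_I denotes the submatrix of B formed by the rows with index in I. Let S = (S_1, …, S_q) and S̃ = (S̃_1, …, S̃_q) be random vectors with independent coordinates such that, for some ρ < 2, the law of every S_j and every S̃_j belongs to M^1_ρ. Let Q (resp. Q̃) be a probability measure on ℝ^d that factors as a product Q⁽I⁾ ⊗ Q⁽J⁾ (resp. Q̃⁽I⁾ ⊗ Q̃⁽J⁾) of a law on the I-coordinates and a law on the J-coordinates, and let R (resp. R̃) be the law of A·S (resp. Ã·S̃) on ℝ^d. If R * Q = R̃ * Q̃ (convolution of measures), then there exists m ∈ ℝ^d such that R̃ is the pushforward of R under x ↦ x − m, Q̃⁽I⁾ is the pushforward of Q⁽I⁾ under y ↦ y + m_I, and Q̃⁽J⁾ is the pushforward of Q⁽J⁾ under y ↦ y + m_J, where m_I and m_J denote the sub-vectors of m indexed by I and J. -/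
/- STATEMENT 1: identifiability up to translation for noisy ICA, Y = A·S + ε, under a
   partition I ∪ J of the coordinates such that all columns of A_I, Ã_I, A_J, Ã_J are
   nonzero, independent light-tailed sources, and noise that factors over I and J. -/

namespace Stmt1

open MeasureTheory

/-- Convolution of two measures: the law of the sum of independent draws. -/
noncomputable def mconv {E : Type*} [MeasurableSpace E] [Add E] (μ ν : Measure E) :
    Measure E :=
  (μ.prod ν).map (fun p => p.1 + p.2)

/-- Membership in M^1_ρ for a measure on ℝ. -/
def memM1 (μ : Measure ℝ) (ρ : ℝ) : Prop :=
  ∃ A B : ℝ, 0 < A ∧ 0 < B ∧ ∀ lam : ℝ,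
    ∫⁻ x, ENNReal.ofReal (Real.exp (lam * x)) ∂μ ≤
      ENNReal.ofReal (A * Real.exp (B * |lam| ^ ρ))

/-- Glue a vector indexed by I and a vector indexed by J into a vector indexed by
Fin d (junk value 0 outside I ∪ J). -/
def glue {d : ℕ} (I J : Finset (Fin d)) (x : ↥I → ℝ) (y : ↥J → ℝ) : Fin d → ℝ :=
  fun i => if h : i ∈ I then x ⟨i, h⟩ else if h' : i ∈ J then y ⟨i, h'⟩ else 0

open Filter Topology Metric
open scoped Nat ComplexConjugate

/-!
Taking marginals of `R * Q = R̃ * Q̃` and cancelling the noise leaves the identity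
`R * (R̃_I ⊗ R̃_J) = R̃ * (R_I ⊗ R_J)` between signals alone. The sources are light-tailed, so all
transforms extend to entire functions on the complexified dual. Fix `Λ` on the `I`-block. Because
the columns of the `J`-block do not vanish, its argument `M` can be chosen so that neither the
transform of `R` at `(Λ, M)` nor that of `R̃_J` at `M` is zero; the identity then shows that along
any complex line the transform of `R_I` vanishes to at most the order of that of `R̃_I`. By symmetry
the orders agree, so the quotient of the two transforms is `exp h` with `h` entire. Growth of order
`ρ < 2` makes `h` affine, that is, `R̃_I` is a translate of `R_I`. The same holds on `J`, and the
identity propagates the translation to `R` and to the noise.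
-/

/-! ### Entire functions of order less than two -/

lemma iteratedDeriv_zero_eq_circleAverage {f : ℂ → ℂ} (hf : Differentiable ℂ f) (n : ℕ) {R : ℝ}
    (hR : 0 < R) :
    iteratedDeriv n f 0 = n ! * Real.circleAverage (fun z => (z ^ n)⁻¹ * f z) 0 R := by
  have h := hf.diffContOnCl.circleIntegral_one_div_sub_center_pow_smul (c := 0) hR n
  rw [Real.circleAverage_eq_circleIntegral hR.ne']
  have e : ∀ z : ℂ, (z - 0)⁻¹ • ((z ^ n)⁻¹ * f z) = (1 / (z - 0) ^ (n + 1)) • f z := fun z => by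
    simp only [sub_zero, smul_eq_mul]
    ring
  rw [funext e, h]
  have hn : (n ! : ℂ) ≠ 0 := Nat.cast_ne_zero.2 n.factorial_ne_zero
  simp only [smul_eq_mul]
  field_simp

lemma circleAverage_conj {f : ℂ → ℂ} {c : ℂ} {R : ℝ} :
    Real.circleAverage (fun z => conj (f z)) c R = conj (Real.circleAverage f c R) := by
  simp [Real.circleAverage_def, intervalIntegral, integral_conj, map_ofNat]

lemma circleAverage_inv_pow_mul_conj {f : ℂ → ℂ} (hf : Differentiable ℂ f) {n : ℕ} (hn : n ≠ 0)
    {R : ℝ} (hR : 0 < R) :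
    Real.circleAverage (fun z => (z ^ n)⁻¹ * conj (f z)) 0 R = 0 := by
  have h : Set.EqOn (fun z => (z ^ n)⁻¹ * conj (f z))
      (fun z => conj (((R : ℂ) ^ (2 * n))⁻¹ * (z ^ n * f z))) (sphere 0 |R|) := by
    intro z hz
    rw [abs_of_pos hR, mem_sphere_zero_iff_norm] at hz
    have hz0 : z ≠ 0 := norm_pos_iff.1 (hz ▸ hR)
    have hz' : conj z ≠ 0 := (map_ne_zero _).2 hz0
    have hz : z * conj z = (R : ℂ) ^ 2 := by rw [Complex.mul_conj', hz]
    simp only [map_mul, map_inv₀, map_pow, Complex.conj_ofReal]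
    rw [pow_mul, ← hz, mul_pow]
    field_simp
  rw [Real.circleAverage_congr_sphere h, circleAverage_conj,
    DiffContOnCl.circleAverage (Differentiable.diffContOnCl (by fun_prop))]
  simp [hn]

/-- Since the average of `z⁻ⁿ * conj (f z)` vanishes, `f` may be replaced by `f + conj f`. -/
lemma norm_iteratedDeriv_zero_le {f : ℂ → ℂ} (hf : Differentiable ℂ f) {n : ℕ} (hn : n ≠ 0)
    {R : ℝ} (hR : 0 < R) :
    ‖iteratedDeriv n f 0‖ ≤
      2 * n ! / R ^ n * Real.circleAverage (fun z => |(f z).re|) 0 R := by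
  have hk : ContinuousOn (fun z : ℂ => (z ^ n)⁻¹) (sphere 0 R) :=
    (continuousOn_id.pow n).inv₀ fun z hz => pow_ne_zero n (ne_zero_of_mem_sphere hR.ne' ⟨z, hz⟩)
  have hfc := hf.continuous
  have h₁ : CircleIntegrable (fun z => (z ^ n)⁻¹ * f z) 0 R :=
    (hk.mul hfc.continuousOn).circleIntegrable hR.le
  have h₂ : CircleIntegrable (fun z => (z ^ n)⁻¹ * conj (f z)) 0 R :=
    (hk.mul (Complex.continuous_conj.comp hfc).continuousOn).circleIntegrable hR.le
  have key : Real.circleAverage (fun z => (z ^ n)⁻¹ * f z) 0 R =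
      Real.circleAverage (fun z => (z ^ n)⁻¹ * (2 * (f z).re : ℝ)) 0 R := by
    have := Real.circleAverage_fun_add h₁ h₂
    rw [circleAverage_inv_pow_mul_conj hf hn hR, add_zero] at this
    simp only [← this, ← mul_add, Complex.add_conj]
  have hle : ‖Real.circleAverage (fun z => (z ^ n)⁻¹ * (2 * (f z).re : ℝ)) 0 R‖ ≤
      Real.circleAverage (fun z => 2 / R ^ n * |(f z).re|) 0 R := by
    simp only [Real.circleAverage_def, norm_smul, smul_eq_mul]
    rw [Real.norm_of_nonneg (by positivity)]
    gcongr
    refine (intervalIntegral.norm_integral_le_integral_norm Real.two_pi_pos.le).trans_eq ?_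
    refine intervalIntegral.integral_congr fun θ _ => ?_
    simp only [Complex.ofReal_mul, Complex.ofReal_ofNat, norm_mul, norm_inv, norm_pow,
      norm_circleMap_zero, abs_of_pos hR, Complex.norm_ofNat, Complex.norm_real, Real.norm_eq_abs]
    ring
  rw [iteratedDeriv_zero_eq_circleAverage hf n hR, key, norm_mul, Complex.norm_natCast]
  have hc := Real.circleAverage_fun_smul (a := 2 / R ^ n) (f := fun z => |(f z).re|) (c := 0)
    (R := R)
  simp only [smul_eq_mul] at hc
  calc _ ≤ (n ! : ℝ) * (2 / R ^ n * Real.circleAverage (fun z => |(f z).re|) 0 R) := by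
        rw [← hc]
        gcongr
    _ = _ := by ring

/-- The entire function `f` satisfies `‖f z‖ ≤ exp (K * (1 + ‖z‖ ^ ρ))` for some constant `K ≥ 0`;
in particular its order is at most `ρ`. -/
def HasExpGrowth (ρ : ℝ) (f : ℂ → ℂ) : Prop :=
  ∃ K : ℝ, 0 ≤ K ∧ ∀ z, ‖f z‖ ≤ Real.exp (K * (1 + ‖z‖ ^ ρ))

lemma eventually_ne_zero_of_differentiable {f : ℂ → ℂ} (hf : Differentiable ℂ f) {a : ℂ}
    (ha : f a ≠ 0) (z : ℂ) : ∀ᶠ y in 𝓝[≠] z, f y ≠ 0 := by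
  have hA : AnalyticOnNhd ℂ f Set.univ := fun z _ => hf.analyticAt z
  refine (hf.analyticAt z).eventually_eq_zero_or_eventually_ne_zero.resolve_left fun h => ha ?_
  exact hA.eqOn_zero_of_preconnected_of_eventuallyEq_zero isPreconnected_univ (Set.mem_univ z) h
    (Set.mem_univ a)

lemma exists_exp_eq_of_forall_ne_zero {E : ℂ → ℂ} (hE : Differentiable ℂ E) (hE0 : ∀ z, E z ≠ 0) :
    ∃ h : ℂ → ℂ, Differentiable ℂ h ∧ ∀ z, E z = Complex.exp (h z) := by
  have hlog : Differentiable ℂ fun z => deriv E z / E z := fun z =>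
    (hE.analyticAt z).deriv.differentiableAt.div (hE z) (hE0 z)
  obtain ⟨L, hL⟩ := hlog.isExactOn_univ
  have hLd : Differentiable ℂ L := fun z => (hL z (Set.mem_univ z)).differentiableAt
  have hconst : ∀ z, E z * Complex.exp (-L z) = E 0 * Complex.exp (-L 0) := fun z =>
    is_const_of_deriv_eq_zero (f := fun z => E z * Complex.exp (-L z)) (by fun_prop) (fun w => by
      refine ((hE w).hasDerivAt.mul (hL w (Set.mem_univ w)).neg.cexp).deriv.trans ?_
      field_simp [hE0 w]
      ring) z 0
  refine ⟨fun z => L z + Complex.log (E 0 * Complex.exp (-L 0)), by fun_prop, fun z => ?_⟩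
  rw [Complex.exp_add, Complex.exp_log (mul_ne_zero (hE0 0) (Complex.exp_ne_zero _)), ← hconst z,
    mul_left_comm, ← Complex.exp_add, add_neg_cancel, Complex.exp_zero, mul_one]

lemma exists_eq_mul_of_analyticOrderAt_eq {f g : ℂ → ℂ} (hf : Differentiable ℂ f)
    (hg : Differentiable ℂ g) {a : ℂ} (ha : f a ≠ 0)
    (hord : ∀ z, analyticOrderAt f z = analyticOrderAt g z) :
    ∃ E : ℂ → ℂ, Differentiable ℂ E ∧ (∀ z, E z ≠ 0) ∧ ∀ z, g z = E z * f z := by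
  have hne := eventually_ne_zero_of_differentiable hf ha
  have hm : MeromorphicOn (g / f) Set.univ :=
    fun z _ => (hg.analyticAt z).meromorphicAt.div (hf.analyticAt z).meromorphicAt
  set E := toMeromorphicNFOn (g / f) Set.univ with hE
  have hNF : MeromorphicNFOn E Set.univ := meromorphicNFOn_toMeromorphicNFOn _ _
  have hEord : ∀ z, meromorphicOrderAt E z = 0 := by
    intro z
    rw [hE, meromorphicOrderAt_toMeromorphicNFOn hm (Set.mem_univ z),
      meromorphicOrderAt_div (hg.analyticAt z).meromorphicAt (hf.analyticAt z).meromorphicAt,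
      (hg.analyticAt z).meromorphicOrderAt_eq, (hf.analyticAt z).meromorphicOrderAt_eq, ← hord z]
    have : analyticOrderAt f z ≠ ⊤ := fun h =>
      let ⟨_, hy, hy'⟩ := ((hne z).and
        ((analyticOrderAt_eq_top.1 h).filter_mono nhdsWithin_le_nhds)).exists
      hy hy'
    lift analyticOrderAt f z to ℕ using this with n
    simp only [ENat.map_natCast]
    exact_mod_cast sub_self (n : ℤ)
  have hEd : Differentiable ℂ E := fun z =>
    ((hNF (Set.mem_univ z)).meromorphicOrderAt_nonneg_iff_analyticAt.1
      (hEord z).ge).differentiableAt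
  refine ⟨E, hEd, fun z => (hNF (Set.mem_univ z)).meromorphicOrderAt_eq_zero_iff.1 (hEord z),
    fun z => ?_⟩
  have hEf : ∀ᶠ y in 𝓝[≠] z, g y = E y * f y := by
    filter_upwards [hne z, hm.toMeromorphicNFOn_eq_self_on_nhdsNE (Set.mem_univ z)] with y hy hy'
    rw [hE, hy', Pi.div_apply, div_mul_cancel₀ _ hy]
  exact tendsto_nhds_unique_of_eventuallyEq
    (hg.continuous.continuousAt.tendsto.mono_left nhdsWithin_le_nhds)
    ((hEd.mul hf).continuous.continuousAt.tendsto.mono_left nhdsWithin_le_nhds) hEf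

lemma circleIntegrable_log_norm {f : ℂ → ℂ} (hf : Differentiable ℂ f) (R : ℝ) :
    CircleIntegrable (fun z => Real.log ‖f z‖) 0 R :=
  MeromorphicOn.circleIntegrable_log_norm fun z _ => (hf.analyticAt z).meromorphicAt

lemma circleAverage_log_norm_nonneg {f : ℂ → ℂ} (hf : Differentiable ℂ f) (h0 : f 0 = 1)
    {R : ℝ} (hR : 0 < R) : 0 ≤ Real.circleAverage (fun z => Real.log ‖f z‖) 0 R := by
  have ha : AnalyticOnNhd ℂ f (closedBall 0 |R|) := fun z _ => hf.analyticAt z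
  rw [ha.circleAverage_log_norm hR.ne' (by simp [h0])]
  simp only [h0, norm_one, Real.log_one, add_zero]
  refine finsum_nonneg fun u => ?_
  by_cases hu : u ∈ closedBall (0 : ℂ) |R|
  · refine mul_nonneg (by exact_mod_cast MeromorphicOn.AnalyticOnNhd.divisor_nonneg ha u) ?_
    rw [zero_sub, norm_neg]
    rcases eq_or_ne u 0 with rfl | hu0
    · simp
    · apply Real.log_nonneg
      rw [← div_eq_mul_inv, one_le_div (norm_pos_iff.2 hu0)]
      simpa [abs_of_pos hR] using hu
  · simp [hu]

lemma circleAverage_abs_log_norm_le {f : ℂ → ℂ} (hf : Differentiable ℂ f) (h0 : f 0 = 1)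
    {R M : ℝ} (hR : 0 < R) (hM : 0 ≤ M) (hb : ∀ z ∈ sphere (0 : ℂ) R, ‖f z‖ ≤ Real.exp M) :
    Real.circleAverage (fun z => |Real.log ‖f z‖|) 0 R ≤ 2 * M := by
  have hi := circleIntegrable_log_norm hf R
  have hc : CircleIntegrable (fun _ : ℂ => 2 * M) 0 R := circleIntegrable_const _ _ _
  have key : Real.circleAverage (fun z => |Real.log ‖f z‖|) 0 R ≤
      Real.circleAverage (fun z => 2 * M - Real.log ‖f z‖) 0 R := by
    refine Real.circleAverage_mono hi.abs (hc.sub hi) fun z hz => ?_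
    rw [abs_of_pos hR] at hz
    have hlog : Real.log ‖f z‖ ≤ M := by
      rcases eq_or_ne (f z) 0 with h | h
      · simpa [h] using hM
      · exact (Real.log_le_iff_le_exp (norm_pos_iff.2 h)).2 (hb z hz)
    rcases abs_cases (Real.log ‖f z‖) with h | h <;> linarith
  rw [Real.circleAverage_fun_sub hc hi, Real.circleAverage_const] at key
  linarith [circleAverage_log_norm_nonneg hf h0 hR]

lemma circleAverage_abs_re_le_of_eq_exp_mul {f g h : ℂ → ℂ} (hf : Differentiable ℂ f)
    (hg : Differentiable ℂ g) (hf0 : f 0 = 1) (hg0 : g 0 = 1)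
    (hfg : ∀ z, g z = Complex.exp (h z) * f z) {R M : ℝ} (hR : 0 < R) (hM : 0 ≤ M)
    (hbf : ∀ z ∈ sphere (0 : ℂ) R, ‖f z‖ ≤ Real.exp M)
    (hbg : ∀ z ∈ sphere (0 : ℂ) R, ‖g z‖ ≤ Real.exp M) :
    Real.circleAverage (fun z => |(h z).re|) 0 R ≤ 4 * M := by
  have hA : AnalyticOnNhd ℂ f Set.univ := fun z _ => hf.analyticAt z
  have hre : (fun z => |(h z).re|) =ᶠ[codiscreteWithin (sphere (0 : ℂ) |R|)]
      fun z => |Real.log ‖g z‖ - Real.log ‖f z‖| := by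
    refine codiscreteWithin_mono (Set.subset_univ _) ?_
    filter_upwards [hA.preimage_zero_mem_codiscrete (x := 0) (by simp [hf0])] with z hz
    have hz' : ‖f z‖ ≠ 0 := by simpa using hz
    rw [hfg, norm_mul, Complex.norm_exp, Real.log_mul (Real.exp_ne_zero _) hz', Real.log_exp,
      add_sub_cancel_right]
  have hif := circleIntegrable_log_norm hf R
  have hig := circleIntegrable_log_norm hg R
  calc Real.circleAverage (fun z => |(h z).re|) 0 R
      = Real.circleAverage (fun z => |Real.log ‖g z‖ - Real.log ‖f z‖|) 0 R :=
        Real.circleAverage_congr_codiscreteWithin hre hR.ne'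
    _ ≤ Real.circleAverage (fun z => |Real.log ‖g z‖| + |Real.log ‖f z‖|) 0 R :=
        Real.circleAverage_mono (hig.sub hif).abs (hig.abs.add hif.abs) fun z _ => abs_sub _ _
    _ = Real.circleAverage (fun z => |Real.log ‖g z‖|) 0 R +
          Real.circleAverage (fun z => |Real.log ‖f z‖|) 0 R :=
        Real.circleAverage_fun_add hig.abs hif.abs
    _ ≤ 2 * M + 2 * M := add_le_add (circleAverage_abs_log_norm_le hg hg0 hR hM hbg)
        (circleAverage_abs_log_norm_le hf hf0 hR hM hbf)
    _ = 4 * M := by ring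

lemma eq_affine_of_circleAverage_abs_re_le {h : ℂ → ℂ} (hh : Differentiable ℂ h) {ρ C : ℝ}
    (hρ : ρ < 2)
    (hC : ∀ R > 0, Real.circleAverage (fun z => |(h z).re|) 0 R ≤ C * (1 + R ^ ρ)) (z : ℂ) :
    h z = h 0 + deriv h 0 * z := by
  have hvanish : ∀ n : ℕ, 2 ≤ n → iteratedDeriv n h 0 = 0 := by
    intro n hn
    have hn' : (2 : ℝ) ≤ n := by exact_mod_cast hn
    have hbound : ∀ R : ℝ, 0 < R →
        ‖iteratedDeriv n h 0‖ ≤ 2 * n ! * C * (R ^ (-(n : ℝ)) + R ^ (-(n - ρ))) := by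
      intro R hR
      calc _ ≤ 2 * n ! / R ^ n * (C * (1 + R ^ ρ)) :=
            (norm_iteratedDeriv_zero_le hh (by lia) hR).trans (by gcongr; exact hC R hR)
        _ = _ := by
          rw [neg_sub, Real.rpow_sub hR, Real.rpow_neg hR.le, Real.rpow_natCast]
          field_simp
    have hlim : Tendsto (fun R : ℝ => 2 * n ! * C * (R ^ (-(n : ℝ)) + R ^ (-(n - ρ)))) atTop
        (𝓝 (2 * n ! * C * (0 + 0))) :=
      ((tendsto_rpow_neg_atTop (by linarith)).add
        (tendsto_rpow_neg_atTop (by linarith))).const_mul _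
    simpa using ge_of_tendsto hlim ((eventually_gt_atTop 0).mono hbound)
  have hsum := Complex.hasSum_taylorSeries_of_entire hh 0 z
  rw [hsum.unique (hasSum_sum_of_ne_finset_zero (s := Finset.range 2) fun n hn => by
    rw [hvanish n (not_lt.1 (Finset.mem_range.not.1 hn)), smul_zero, smul_zero])]
  simp [Finset.sum_range_succ, mul_comm]

lemma exists_eq_exp_linear_mul {f g : ℂ → ℂ} (hf : Differentiable ℂ f) (hg : Differentiable ℂ g)
    (hf0 : f 0 = 1) (hg0 : g 0 = 1) {ρ : ℝ} (hρ : ρ < 2)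
    (hfρ : HasExpGrowth ρ f) (hgρ : HasExpGrowth ρ g)
    (hord : ∀ z, analyticOrderAt f z = analyticOrderAt g z) :
    ∃ c : ℂ, ∀ z, g z = Complex.exp (c * z) * f z := by
  obtain ⟨E, hE, hE0, hEfg⟩ :=
    exists_eq_mul_of_analyticOrderAt_eq hf hg (hf0.trans_ne one_ne_zero) hord
  obtain ⟨h, hh, hexp⟩ := exists_exp_eq_of_forall_ne_zero hE hE0
  have hfg : ∀ z, g z = Complex.exp (h z) * f z := fun z => by rw [hEfg, hexp]
  obtain ⟨K₁, hK₁, hb₁⟩ := hfρ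
  obtain ⟨K₂, hK₂, hb₂⟩ := hgρ
  have haffine : ∀ z, h z = h 0 + deriv h 0 * z := by
    refine eq_affine_of_circleAverage_abs_re_le hh hρ (C := 4 * (K₁ + K₂)) fun R hR => ?_
    rw [mul_assoc]
    refine circleAverage_abs_re_le_of_eq_exp_mul hf hg hf0 hg0 hfg hR (by positivity)
      (fun z hz => (hb₁ z).trans ?_) fun z hz => (hb₂ z).trans ?_ <;>
    · rw [mem_sphere_zero_iff_norm.1 hz]
      gcongr
      linarith
  have h0 : Complex.exp (h 0) = 1 := by simpa [hf0, hg0] using (hfg 0).symm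
  exact ⟨deriv h 0, fun z => by rw [hfg, haffine z, Complex.exp_add, h0, one_mul]⟩

lemma tendsto_ofReal_mul_I_nhdsNE (τ₀ : ℝ) :
    Tendsto (fun τ : ℝ => (τ : ℂ) * Complex.I) (𝓝[≠] τ₀) (𝓝[≠] (τ₀ * Complex.I)) := by
  have hcont : Continuous fun τ : ℝ => (τ : ℂ) * Complex.I := by fun_prop
  exact hcont.continuousWithinAt.tendsto_nhdsWithin fun τ hτ => by simpa using hτ

lemma eq_of_eventually_eq_mul_I {f g : ℂ → ℂ} (hf : Differentiable ℂ f) (hg : Differentiable ℂ g)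
    (h : ∀ᶠ τ : ℝ in 𝓝 0, f (τ * Complex.I) = g (τ * Complex.I)) : f = g := by
  ext z
  by_contra hne
  have hsub : ∀ᶠ τ : ℝ in 𝓝[≠] 0, (f - g) (τ * Complex.I) ≠ 0 :=
    (tendsto_ofReal_mul_I_nhdsNE 0).eventually
      (eventually_ne_zero_of_differentiable (hf.sub hg) (sub_ne_zero.2 hne) _)
  obtain ⟨τ, h₁, h₂⟩ := (hsub.and (h.filter_mono nhdsWithin_le_nhds)).exists
  exact h₁ (sub_eq_zero.2 h₂)

/-! ### Complex moment generating functions -/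

section ComplexMGF

variable {E F : Type*} [NormedAddCommGroup E] [NormedSpace ℝ E] [MeasurableSpace E]
  [NormedAddCommGroup F] [NormedSpace ℝ F] [MeasurableSpace F]

/-- The complex moment generating function of a measure on a real normed space, as a function on the
complexified dual `E →L[ℝ] ℂ`; at `L.smulRight Complex.I` it is `charFunDual`. -/
noncomputable def complexMGFDual (μ : Measure E) (Λ : E →L[ℝ] ℂ) : ℂ :=
  ∫ x, Complex.exp (Λ x) ∂μ

/-- Every linear functional has finite exponential moments, so that `complexMGFDual` is an
absolutely convergent integral. -/
def HasExpMoments (μ : Measure E) : Prop :=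
  ∀ L : StrongDual ℝ E, Integrable (fun x => Real.exp (L x)) μ

lemma complexMGFDual_zero_smul (μ : Measure E) [IsProbabilityMeasure μ] (Λ : E →L[ℝ] ℂ) :
    complexMGFDual μ ((0 : ℂ) • Λ) = 1 := by
  simp [complexMGFDual]

lemma charFunDual_eq_complexMGFDual (μ : Measure E) (L : StrongDual ℝ E) :
    charFunDual μ L = complexMGFDual μ (L.smulRight Complex.I) := by
  simp [charFunDual_apply, complexMGFDual]

lemma charFunDual_smul_eq_complexMGFDual (μ : Measure E) (L : StrongDual ℝ E) (τ : ℝ) :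
    charFunDual μ (τ • L) = complexMGFDual μ ((τ * Complex.I) • L.smulRight 1) := by
  simp [charFunDual_apply, complexMGFDual, mul_right_comm]

lemma complexMGFDual_prod (μ : Measure E) (ν : Measure F) [SFinite μ] [SFinite ν]
    (Λ : E →L[ℝ] ℂ) (M : F →L[ℝ] ℂ) :
    complexMGFDual (μ.prod ν) (Λ.coprod M) = complexMGFDual μ Λ * complexMGFDual ν M := by
  simp only [complexMGFDual, ContinuousLinearMap.coprod_apply, Complex.exp_add]
  exact integral_prod_mul (fun x => Complex.exp (Λ x)) fun y => Complex.exp (M y)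

lemma HasExpMoments.prod {μ : Measure E} {ν : Measure F} (hμ : HasExpMoments μ)
    (hν : HasExpMoments ν) : HasExpMoments (μ.prod ν) := fun L => by
  refine ((hμ (L ∘L .inl ℝ E F)).mul_prod (hν (L ∘L .inr ℝ E F))).congr (.of_forall fun p => ?_)
  simp [← Real.exp_add, ← map_add]

variable [BorelSpace E] [BorelSpace F]

lemma complexMGFDual_map (μ : Measure E) (T : E →L[ℝ] F) (M : F →L[ℝ] ℂ) :
    complexMGFDual (μ.map T) M = complexMGFDual μ (M ∘L T) :=
  integral_map T.continuous.measurable.aemeasurable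
    (by fun_prop : Continuous fun y => Complex.exp (M y)).aestronglyMeasurable

lemma complexMGFDual_dirac (m : E) (Λ : E →L[ℝ] ℂ) :
    complexMGFDual (Measure.dirac m) Λ = Complex.exp (Λ m) :=
  integral_dirac' _ _ (by fun_prop : Continuous fun x => Complex.exp (Λ x)).stronglyMeasurable

namespace HasExpMoments

lemma integrable_cexp {μ : Measure E} (hμ : HasExpMoments μ) (Λ : E →L[ℝ] ℂ) :
    Integrable (fun x => Complex.exp (Λ x)) μ := by
  refine (hμ (Complex.reCLM ∘L Λ)).mono' (Continuous.aestronglyMeasurable (by fun_prop))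
    (.of_forall fun x => ?_)
  simp [Complex.norm_exp]

lemma map {μ : Measure E} (hμ : HasExpMoments μ) (T : E →L[ℝ] F) : HasExpMoments (μ.map T) :=
  fun L => (integrable_map_measure (Continuous.aestronglyMeasurable (by fun_prop))
    T.continuous.measurable.aemeasurable).2 (hμ (L ∘L T))

lemma dirac (m : E) : HasExpMoments (Measure.dirac m) := fun L =>
  integrable_dirac' (Continuous.stronglyMeasurable (by fun_prop)) (by simp)

lemma integrable_exp_add_norm {μ : Measure E} (hμ : HasExpMoments μ) (L : StrongDual ℝ E)
    (Λ : E →L[ℝ] ℂ) : Integrable (fun x => Real.exp (L x + ‖Λ x‖)) μ := by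
  set a : StrongDual ℝ E := Complex.reCLM ∘L Λ
  set b : StrongDual ℝ E := Complex.imCLM ∘L Λ
  refine ((((hμ (L + a + b)).add (hμ (L + a - b))).add (hμ (L - a + b))).add
    (hμ (L - a - b))).mono' (Continuous.aestronglyMeasurable (by fun_prop))
    (.of_forall fun x => ?_)
  calc ‖Real.exp (L x + ‖Λ x‖)‖ ≤ Real.exp (L x) * Real.exp |a x| * Real.exp |b x| := by
        rw [Real.norm_of_nonneg (Real.exp_pos _).le, ← Real.exp_add, ← Real.exp_add, add_assoc]
        gcongr
        exact Complex.norm_le_abs_re_add_abs_im (Λ x)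
    _ ≤ Real.exp (L x) * (Real.exp (a x) + Real.exp (-a x)) *
          (Real.exp (b x) + Real.exp (-b x)) := by
        gcongr <;> exact Real.exp_abs_le _
    _ = _ := by
        simp only [Pi.add_apply, add_apply, neg_apply, sub_eq_add_neg, Real.exp_add]
        ring

lemma hasDerivAt {μ : Measure E} (hμ : HasExpMoments μ) (Λ₀ Λ₁ : E →L[ℝ] ℂ) (z₀ : ℂ) :
    HasDerivAt (fun z : ℂ => complexMGFDual μ (Λ₀ + z • Λ₁))
      (∫ x, Λ₁ x * Complex.exp ((Λ₀ + z₀ • Λ₁) x) ∂μ) z₀ := by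
  set L : StrongDual ℝ E := Complex.reCLM ∘L (Λ₀ + z₀ • Λ₁)
  refine (hasDerivAt_integral_of_dominated_loc_of_deriv_le (ball_mem_nhds z₀ one_pos)
    (F' := fun z x => Λ₁ x * Complex.exp ((Λ₀ + z • Λ₁) x))
    (.of_forall fun z => (hμ.integrable_cexp _).aestronglyMeasurable) (hμ.integrable_cexp _)
    (Continuous.aestronglyMeasurable (by fun_prop)) (.of_forall fun x z hz => ?_)
    (hμ.integrable_exp_add_norm L ((2 : ℝ) • Λ₁)) (.of_forall fun x z _ => ?_)).2
  · have hre : ((z - z₀) * Λ₁ x).re ≤ ‖Λ₁ x‖ := by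
      refine (Complex.re_le_norm _).trans ?_
      rw [norm_mul]
      exact mul_le_of_le_one_left (norm_nonneg _) (mem_ball_iff_norm.1 hz).le
    have hsplit : ((Λ₀ + z • Λ₁) x).re = L x + ((z - z₀) * Λ₁ x).re := by
      rw [ContinuousLinearMap.comp_apply, Complex.reCLM_apply, ← Complex.add_re]
      simp only [add_apply, smul_apply, smul_eq_mul]
      ring_nf
    calc ‖Λ₁ x * Complex.exp ((Λ₀ + z • Λ₁) x)‖
        = ‖Λ₁ x‖ * Real.exp (L x + ((z - z₀) * Λ₁ x).re) := by
          rw [norm_mul, Complex.norm_exp, hsplit]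
      _ ≤ Real.exp ‖Λ₁ x‖ * Real.exp (L x + ‖Λ₁ x‖) := by
          gcongr
          linarith [Real.add_one_le_exp ‖Λ₁ x‖]
      _ = Real.exp (L x + ‖((2 : ℝ) • Λ₁) x‖) := by
          rw [← Real.exp_add, smul_apply, norm_smul, Real.norm_ofNat]
          ring_nf
  · have h : HasDerivAt (fun z : ℂ => (Λ₀ + z • Λ₁) x) (Λ₁ x) z := by
      simpa using ((hasDerivAt_id z).mul_const (Λ₁ x)).const_add (Λ₀ x)
    simpa only [mul_comm] using h.cexp

lemma differentiable_add_smul {μ : Measure E} (hμ : HasExpMoments μ) (Λ₀ Λ₁ : E →L[ℝ] ℂ) :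
    Differentiable ℂ fun z : ℂ => complexMGFDual μ (Λ₀ + z • Λ₁) :=
  fun z => (hμ.hasDerivAt Λ₀ Λ₁ z).differentiableAt

lemma differentiable_smul {μ : Measure E} (hμ : HasExpMoments μ) (Λ : E →L[ℝ] ℂ) :
    Differentiable ℂ fun z : ℂ => complexMGFDual μ (z • Λ) := by
  simpa using hμ.differentiable_add_smul 0 Λ

end HasExpMoments

lemma continuous_charFunDual_smul (μ : Measure E) [IsFiniteMeasure μ] (L : StrongDual ℝ E) :
    Continuous fun τ : ℝ => charFunDual μ (τ • L) := by
  simp only [← charFun_map_eq_charFunDual_smul]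
  exact continuous_charFun

variable [SecondCountableTopology E]

lemma complexMGFDual_conv (μ ν : Measure E) [SFinite μ] [SFinite ν] (Λ : E →L[ℝ] ℂ) :
    complexMGFDual (μ ∗ ν) Λ = complexMGFDual μ Λ * complexMGFDual ν Λ := by
  have hcont : Continuous fun x => Complex.exp (Λ x) := by fun_prop
  rw [complexMGFDual, Measure.conv, integral_map measurable_add.aemeasurable
    hcont.aestronglyMeasurable]
  simp only [map_add, Complex.exp_add]
  exact integral_prod_mul (fun x => Complex.exp (Λ x)) fun y => Complex.exp (Λ y)

lemma ext_of_complexMGFDual [CompleteSpace E] {μ ν : Measure E}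
    [IsFiniteMeasure μ] [IsFiniteMeasure ν] (h : complexMGFDual μ = complexMGFDual ν) : μ = ν :=
  Measure.ext_of_charFunDual <| funext fun L => by
    rw [charFunDual_eq_complexMGFDual, charFunDual_eq_complexMGFDual, h]

lemma HasExpMoments.conv {μ ν : Measure E} (hμ : HasExpMoments μ) (hν : HasExpMoments ν) :
    HasExpMoments (μ ∗ ν) :=
  (hμ.prod hν).map (ContinuousLinearMap.fst ℝ E E + ContinuousLinearMap.snd ℝ E E)

namespace HasExpMoments

variable [CompleteSpace E]

/-- Both sides extend analytically along rays, so it is enough to divide by the characteristic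
function of `ν` where it does not vanish, near `0`. -/
lemma conv_right_cancel {μ μ' ν : Measure E} [IsFiniteMeasure μ] [IsFiniteMeasure μ']
    [IsProbabilityMeasure ν] (hμ : HasExpMoments μ) (hμ' : HasExpMoments μ')
    (h : μ ∗ ν = μ' ∗ ν) : μ = μ' := by
  refine Measure.ext_of_charFunDual (funext fun L => ?_)
  have hν : ∀ᶠ τ : ℝ in 𝓝 0, charFunDual ν (τ • L) ≠ 0 :=
    (continuous_charFunDual_smul ν L).continuousAt.eventually_ne (by simp [charFunDual_apply])
  have hnear : ∀ᶠ τ : ℝ in 𝓝 0, charFunDual μ (τ • L) = charFunDual μ' (τ • L) := by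
    filter_upwards [hν] with τ hτ
    refine mul_right_cancel₀ hτ ?_
    rw [← charFunDual_conv, ← charFunDual_conv, h]
  simp only [charFunDual_smul_eq_complexMGFDual] at hnear
  have heq := congrFun (eq_of_eventually_eq_mul_I (hμ.differentiable_smul _)
    (hμ'.differentiable_smul _) hnear) ((1 : ℝ) * Complex.I)
  simpa only [← charFunDual_smul_eq_complexMGFDual, one_smul] using heq

/-- Along a ray, the characteristic function of `μ` is the trace of an entire function and so has
isolated zeros, which are reached by continuity. -/
lemma conv_left_cancel {μ ν ν' : Measure E} [IsProbabilityMeasure μ] [IsFiniteMeasure ν]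
    [IsFiniteMeasure ν'] (hμ : HasExpMoments μ) (h : μ ∗ ν = μ ∗ ν') : ν = ν' := by
  refine Measure.ext_of_charFunDual (funext fun L => ?_)
  have hμ0 : ∀ᶠ τ : ℝ in 𝓝[≠] 1, charFunDual μ (τ • L) ≠ 0 := by
    simp only [charFunDual_smul_eq_complexMGFDual]
    exact (tendsto_ofReal_mul_I_nhdsNE 1).eventually
      (eventually_ne_zero_of_differentiable (hμ.differentiable_smul _) (a := 0)
        ((complexMGFDual_zero_smul μ _).trans_ne one_ne_zero) _)
  have hnear : ∀ᶠ τ : ℝ in 𝓝[≠] 1, charFunDual ν (τ • L) = charFunDual ν' (τ • L) := by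
    filter_upwards [hμ0] with τ hτ
    refine mul_left_cancel₀ hτ ?_
    rw [← charFunDual_conv, ← charFunDual_conv, h]
  simpa using tendsto_nhds_unique_of_eventuallyEq
    ((continuous_charFunDual_smul ν L).continuousAt.mono_left nhdsWithin_le_nhds)
    ((continuous_charFunDual_smul ν' L).continuousAt.mono_left nhdsWithin_le_nhds) hnear

end HasExpMoments

end ComplexMGF

/-! ### The classes `M_ρ` -/

section MemM

lemma exp_apply_le_one_add_exp {E : Type*} [NormedAddCommGroup E] [NormedSpace ℝ E]
    {L : StrongDual ℝ E} (hL : ‖L‖ ≤ 1) (x : E) :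
    Real.exp (L x) ≤ 1 + Real.exp ((‖L‖⁻¹ • L) x) := by
  have hLN : L x = ‖L‖ * (‖L‖⁻¹ • L) x := by
    rcases eq_or_ne L 0 with h0 | h0
    · simp [h0]
    · simp [mul_inv_cancel_left₀ (norm_ne_zero_iff.2 h0)]
  rcases le_total 0 ((‖L‖⁻¹ • L) x) with h | h
  · have : Real.exp (L x) ≤ Real.exp ((‖L‖⁻¹ • L) x) :=
      Real.exp_le_exp.2 (hLN.trans_le (mul_le_of_le_one_left h hL))
    linarith
  · have : Real.exp (L x) ≤ 1 :=
      Real.exp_le_one_iff.2 (hLN.trans_le (mul_nonpos_of_nonneg_of_nonpos (norm_nonneg L) h))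
    linarith [Real.exp_pos ((‖L‖⁻¹ • L) x)]

variable {E F : Type*} [NormedAddCommGroup E] [NormedSpace ℝ E] [MeasurableSpace E]
  [NormedAddCommGroup F] [NormedSpace ℝ F] [MeasurableSpace F]

/-- The class `M^p_ρ`, on any real normed space: the linear form `λᵀx` becomes an element of the
dual, and `‖λ‖` its operator norm. -/
def memM (μ : Measure E) (ρ : ℝ) : Prop :=
  ∃ A B : ℝ, 0 < A ∧ 0 < B ∧ ∀ L : StrongDual ℝ E,
    ∫⁻ x, ENNReal.ofReal (Real.exp (L x)) ∂μ ≤ ENNReal.ofReal (A * Real.exp (B * ‖L‖ ^ ρ))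

lemma memM1.memM {μ : Measure ℝ} {ρ : ℝ} (hμ : memM1 μ ρ) : memM μ ρ := by
  obtain ⟨A, B, hA, hB, h⟩ := hμ
  refine ⟨A, B, hA, hB, fun L => ?_⟩
  obtain ⟨c, rfl⟩ : ∃ c, L = ContinuousLinearMap.toSpanSingleton ℝ c := ⟨L 1, by ext; simp⟩
  simpa [mul_comm] using h c

variable [BorelSpace E] [BorelSpace F] {μ : Measure E} {ρ : ℝ}

lemma memM_iff_integral_le : memM μ ρ ↔ HasExpMoments μ ∧ ∃ A B : ℝ, 0 < A ∧ 0 < B ∧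
    ∀ L : StrongDual ℝ E, ∫ x, Real.exp (L x) ∂μ ≤ A * Real.exp (B * ‖L‖ ^ ρ) := by
  have hpos : ∀ L : StrongDual ℝ E, 0 ≤ᵐ[μ] fun x => Real.exp (L x) := fun L =>
    .of_forall fun x => (Real.exp_pos _).le
  refine ⟨fun ⟨A, B, hA, hB, h⟩ => ?_, fun ⟨hμ, A, B, hA, hB, h⟩ => ⟨A, B, hA, hB, fun L => ?_⟩⟩
  · have hμ : HasExpMoments μ := fun L =>
      ⟨Continuous.aestronglyMeasurable (by fun_prop),
        (hasFiniteIntegral_iff_ofReal (hpos L)).2 ((h L).trans_lt ENNReal.ofReal_lt_top)⟩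
    refine ⟨hμ, A, B, hA, hB, fun L => (ENNReal.ofReal_le_ofReal_iff (by positivity)).1 ?_⟩
    exact (ofReal_integral_eq_lintegral_ofReal (hμ L) (hpos L)).trans_le (h L)
  · rw [← ofReal_integral_eq_lintegral_ofReal (hμ L) (hpos L)]
    exact ENNReal.ofReal_le_ofReal (h L)

namespace memM

lemma hasExpMoments (hμ : memM μ ρ) : HasExpMoments μ :=
  (memM_iff_integral_le.1 hμ).1

/-- A functional of norm less than one is rescaled to the unit sphere. -/
lemma mono (hμ : memM μ ρ) {ρ' : ℝ} (h : ρ ≤ ρ') : memM μ ρ' := by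
  obtain ⟨hexp, A, B, hA, hB, hle⟩ := memM_iff_integral_le.1 hμ
  have hunit : ∀ N : StrongDual ℝ E, ‖N‖ = 0 ∨ ‖N‖ = 1 →
      ∫ x, Real.exp (N x) ∂μ ≤ A * Real.exp B := fun N hN => by
    refine (hle N).trans ?_
    gcongr
    refine mul_le_of_le_one_right hB.le ?_
    rcases hN with hN | hN <;> simp [hN, Real.zero_rpow_le_one]
  refine memM_iff_integral_le.2 ⟨hexp, 2 * (A * Real.exp B), B, by positivity, hB, fun L => ?_⟩
  rcases le_total 1 ‖L‖ with hL | hL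
  · calc ∫ x, Real.exp (L x) ∂μ ≤ A * Real.exp (B * ‖L‖ ^ ρ) := hle L
      _ ≤ (2 * (A * Real.exp B)) * Real.exp (B * ‖L‖ ^ ρ') := by
        gcongr
        nlinarith [Real.one_le_exp hB.le]
  · set N : StrongDual ℝ E := ‖L‖⁻¹ • L
    have hN : ‖N‖ = 0 ∨ ‖N‖ = 1 := by
      rcases eq_or_ne L 0 with h0 | h0
      · simp [N, h0]
      · exact .inr (norm_smul_inv_norm (𝕜 := ℝ) h0)
    have hpt : ∀ x, Real.exp (L x) ≤ Real.exp ((0 : StrongDual ℝ E) x) + Real.exp (N x) := by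
      simpa only [zero_apply, Real.exp_zero] using exp_apply_le_one_add_exp hL
    calc ∫ x, Real.exp (L x) ∂μ
        ≤ ∫ x, (Real.exp ((0 : StrongDual ℝ E) x) + Real.exp (N x)) ∂μ :=
          integral_mono (hexp L) ((hexp 0).add (hexp N)) hpt
      _ = ∫ x, Real.exp ((0 : StrongDual ℝ E) x) ∂μ + ∫ x, Real.exp (N x) ∂μ :=
          integral_add (hexp 0) (hexp N)
      _ ≤ A * Real.exp B + A * Real.exp B := add_le_add (hunit 0 (.inl norm_zero)) (hunit N hN)
      _ = 2 * (A * Real.exp B) := by ring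
      _ ≤ 2 * (A * Real.exp B) * Real.exp (B * ‖L‖ ^ ρ') :=
          le_mul_of_one_le_right (by positivity) (Real.one_le_exp (by positivity))

lemma map (hμ : memM μ ρ) (hρ : 0 ≤ ρ) (T : E →L[ℝ] F) : memM (μ.map T) ρ := by
  obtain ⟨hexp, A, B, hA, hB, h⟩ := memM_iff_integral_le.1 hμ
  refine memM_iff_integral_le.2 ⟨hexp.map T, A, B * (‖T‖ + 1) ^ ρ, hA, by positivity, fun L => ?_⟩
  calc ∫ y, Real.exp (L y) ∂μ.map T = ∫ x, Real.exp ((L ∘L T) x) ∂μ :=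
        integral_map T.continuous.measurable.aemeasurable
          (Continuous.aestronglyMeasurable (by fun_prop))
    _ ≤ A * Real.exp (B * ‖L ∘L T‖ ^ ρ) := h (L ∘L T)
    _ ≤ A * Real.exp (B * (‖T‖ + 1) ^ ρ * ‖L‖ ^ ρ) := by
        rw [mul_assoc B, ← Real.mul_rpow (by positivity) (by positivity)]
        gcongr
        refine (L.opNorm_comp_le T).trans ?_
        rw [mul_comm]
        gcongr
        linarith

lemma hasExpGrowth (hμ : memM μ ρ) (hρ : 0 ≤ ρ) (Λ : E →L[ℝ] ℂ) :
    HasExpGrowth ρ fun z : ℂ => complexMGFDual μ (z • Λ) := by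
  obtain ⟨-, A, B, hA, hB, h⟩ := memM_iff_integral_le.1 hμ
  refine ⟨|Real.log A| + B * ‖Λ‖ ^ ρ, by positivity, fun z => ?_⟩
  have hnorm : ‖Complex.reCLM ∘L (z • Λ)‖ ≤ ‖z‖ * ‖Λ‖ := by
    refine (ContinuousLinearMap.opNorm_comp_le _ _).trans ?_
    rw [Complex.reCLM_norm, one_mul, norm_smul]
  calc ‖complexMGFDual μ (z • Λ)‖ ≤ ∫ x, ‖Complex.exp ((z • Λ) x)‖ ∂μ :=
        norm_integral_le_integral_norm _
    _ = ∫ x, Real.exp ((Complex.reCLM ∘L (z • Λ)) x) ∂μ :=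
        integral_congr_ae (.of_forall fun x => Complex.norm_exp _)
    _ ≤ A * Real.exp (B * ‖Complex.reCLM ∘L (z • Λ)‖ ^ ρ) := h _
    _ ≤ Real.exp |Real.log A| * Real.exp (B * (‖z‖ * ‖Λ‖) ^ ρ) := by
        gcongr
        exact (Real.exp_log hA).ge.trans (Real.exp_le_exp.2 (le_abs_self _))
    _ ≤ Real.exp ((|Real.log A| + B * ‖Λ‖ ^ ρ) * (1 + ‖z‖ ^ ρ)) := by
        rw [← Real.exp_add, Real.mul_rpow (norm_nonneg z) (norm_nonneg Λ)]
        gcongr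
        have h₁ : 0 ≤ |Real.log A| * ‖z‖ ^ ρ := by positivity
        have h₂ : 0 ≤ B * ‖Λ‖ ^ ρ := by positivity
        linarith

end memM

section Pi

variable {ι : Type*} [Fintype ι] {G : ι → Type*} [∀ j, NormedAddCommGroup (G j)]
  [∀ j, NormedSpace ℝ (G j)]

lemma norm_comp_single_le [DecidableEq ι] (L : StrongDual ℝ (∀ j, G j)) (j : ι) :
    ‖L ∘L .single ℝ G j‖ ≤ ‖L‖ :=
  ContinuousLinearMap.opNorm_le_bound _ (norm_nonneg L) fun y =>
    (L.le_opNorm _).trans_eq (congrArg (‖L‖ * ·) (Pi.norm_single y))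

lemma exp_apply_eq_prod [DecidableEq ι] (L : StrongDual ℝ (∀ j, G j)) (x : ∀ j, G j) :
    Real.exp (L x) = ∏ j, Real.exp ((L ∘L .single ℝ G j) (x j)) := by
  rw [← Real.exp_sum, L.sum_comp_single]

variable [∀ j, MeasurableSpace (G j)] {μ : ∀ j, Measure (G j)} [∀ j, SigmaFinite (μ j)]

lemma complexMGFDual_pi [DecidableEq ι] (Λ : (∀ j, G j) →L[ℝ] ℂ) :
    complexMGFDual (Measure.pi μ) Λ = ∏ j, complexMGFDual (μ j) (Λ ∘L .single ℝ G j) := by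
  simp only [complexMGFDual, ← Λ.sum_comp_single, Complex.exp_sum]
  exact integral_fintype_prod_eq_prod fun j y => Complex.exp ((Λ ∘L .single ℝ G j) y)

variable [∀ j, BorelSpace (G j)] [∀ j, SecondCountableTopology (G j)]

lemma memM.pi {ρ : ℝ} (hμ : ∀ j, memM (μ j) ρ) (hρ : 0 ≤ ρ) : memM (Measure.pi μ) ρ := by
  classical
  choose hexp A B hA hB h using fun j => memM_iff_integral_le.1 (hμ j)
  refine memM_iff_integral_le.2 ⟨fun L => ?_, ∏ j, A j, 1 + ∑ j, B j,
    Finset.prod_pos fun j _ => hA j,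
    add_pos_of_pos_of_nonneg one_pos (Finset.sum_nonneg fun j _ => (hB j).le), fun L => ?_⟩
  · simp only [exp_apply_eq_prod]
    exact Integrable.fintype_prod_dep (f := fun j y => Real.exp ((L ∘L .single ℝ G j) y))
      fun j => hexp j (L ∘L .single ℝ G j)
  · have hfactor : ∀ j, ∫ y, Real.exp ((L ∘L .single ℝ G j) y) ∂μ j ≤
        A j * Real.exp (B j * ‖L‖ ^ ρ) := fun j => by
      refine (h j _).trans ?_
      have := (hA j).le
      have := (hB j).le
      gcongr
      exact norm_comp_single_le L j
    calc ∫ x, Real.exp (L x) ∂Measure.pi μ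
        = ∏ j, ∫ y, Real.exp ((L ∘L .single ℝ G j) y) ∂μ j := by
          simp only [exp_apply_eq_prod]
          exact integral_fintype_prod_eq_prod fun j y => Real.exp ((L ∘L .single ℝ G j) y)
      _ ≤ ∏ j, (A j * Real.exp (B j * ‖L‖ ^ ρ)) :=
          Finset.prod_le_prod (fun j _ => integral_nonneg fun _ => (Real.exp_pos _).le)
            fun j _ => hfactor j
      _ = (∏ j, A j) * Real.exp ((∑ j, B j) * ‖L‖ ^ ρ) := by
          rw [Finset.prod_mul_distrib, ← Real.exp_sum, Finset.sum_mul]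
      _ ≤ (∏ j, A j) * Real.exp ((1 + ∑ j, B j) * ‖L‖ ^ ρ) := by
          have := Finset.prod_nonneg fun j (_ : j ∈ Finset.univ) => (hA j).le
          gcongr
          linarith

end Pi

end MemM

/-! ### Deconvolution on a product -/

section Marginals

variable {E F : Type*} [NormedAddCommGroup E] [NormedSpace ℝ E] [MeasurableSpace E] [BorelSpace E]
  [NormedAddCommGroup F] [NormedSpace ℝ F] [MeasurableSpace F]
  [BorelSpace F] [SecondCountableTopology F]

lemma HasExpMoments.differentiable_coprod_smul {R : Measure (E × F)} (hR : HasExpMoments R)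
    (Λ : E →L[ℝ] ℂ) (M : F →L[ℝ] ℂ) :
    Differentiable ℂ fun w : ℂ => complexMGFDual R (Λ.coprod (w • M)) := by
  have h : ∀ w : ℂ, Λ.coprod (w • M) = Λ.coprod 0 + w • ContinuousLinearMap.coprod 0 M :=
    fun w => by ext <;> simp
  simpa only [h] using hR.differentiable_add_smul _ _

lemma HasExpMoments.differentiable_smul_coprod {R : Measure (E × F)} (hR : HasExpMoments R)
    (Λ : E →L[ℝ] ℂ) (M : F →L[ℝ] ℂ) :
    Differentiable ℂ fun z : ℂ => complexMGFDual R ((z • Λ).coprod M) := by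
  have h : ∀ z : ℂ, (z • Λ).coprod M = ContinuousLinearMap.coprod 0 M + z • Λ.coprod 0 :=
    fun z => by ext <;> simp
  simpa only [h] using hR.differentiable_add_smul _ _

/-- The transform of `R` does not vanish identically on any of the affine subspaces `{Λ} × F'`,
where `F'` is the complexified dual of `F`. It makes zeros of the marginal transform visible
through the joint one. -/
def NonvanishingSections (R : Measure (E × F)) : Prop :=
  ∀ Λ : E →L[ℝ] ℂ, ∃ M : F →L[ℝ] ℂ, complexMGFDual R (Λ.coprod M) ≠ 0

lemma NonvanishingSections.exists_ne_zero_and {R R' : Measure (E × F)} [IsProbabilityMeasure R']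
    (hns : NonvanishingSections R) (hR : HasExpMoments R) (hR' : HasExpMoments R')
    (Λ : E →L[ℝ] ℂ) :
    ∃ M : F →L[ℝ] ℂ, complexMGFDual R (Λ.coprod M) ≠ 0 ∧ complexMGFDual R'.snd M ≠ 0 := by
  obtain ⟨M, hM⟩ := hns Λ
  have hjoint : ∀ᶠ w : ℂ in 𝓝[≠] 1, complexMGFDual R (Λ.coprod (w • M)) ≠ 0 :=
    eventually_ne_zero_of_differentiable (hR.differentiable_coprod_smul Λ M) (a := 1)
      (by simpa using hM) 1
  have hsnd : ∀ᶠ w : ℂ in 𝓝[≠] 1, complexMGFDual R'.snd (w • M) ≠ 0 :=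
    eventually_ne_zero_of_differentiable
      (HasExpMoments.differentiable_smul (hR'.map (.snd ℝ E F)) M) (a := 0)
      ((complexMGFDual_zero_smul R'.snd M).trans_ne one_ne_zero) 1
  obtain ⟨w, hw⟩ := (hjoint.and hsnd).exists
  exact ⟨w • M, hw⟩

variable [SecondCountableTopology E]

lemma fst_conv (μ ν : Measure (E × F)) [SFinite μ] [SFinite ν] :
    (μ ∗ ν).fst = μ.fst ∗ ν.fst :=
  Measure.map_conv_continuousLinearMap (ContinuousLinearMap.fst ℝ E F)

lemma snd_conv (μ ν : Measure (E × F)) [SFinite μ] [SFinite ν] :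
    (μ ∗ ν).snd = μ.snd ∗ ν.snd :=
  Measure.map_conv_continuousLinearMap (ContinuousLinearMap.snd ℝ E F)

lemma map_swap_conv (μ ν : Measure (E × F)) [SFinite μ] [SFinite ν] :
    (μ ∗ ν).map Prod.swap = μ.map Prod.swap ∗ ν.map Prod.swap :=
  Measure.map_conv_continuousLinearMap (ContinuousLinearEquiv.prodComm ℝ E F).toContinuousLinearMap

variable {R R' : Measure (E × F)} [IsProbabilityMeasure R] [IsProbabilityMeasure R']

lemma analyticOrderAt_fst_le (hR : HasExpMoments R) (hR' : HasExpMoments R')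
    (hns : NonvanishingSections R) (h : R ∗ R'.fst.prod R'.snd = R' ∗ R.fst.prod R.snd)
    (Λ : E →L[ℝ] ℂ) (z₀ : ℂ) :
    analyticOrderAt (fun z : ℂ => complexMGFDual R.fst (z • Λ)) z₀ ≤
      analyticOrderAt (fun z : ℂ => complexMGFDual R'.fst (z • Λ)) z₀ := by
  obtain ⟨M, hjoint, hsnd⟩ := hns.exists_ne_zero_and hR hR' (z₀ • Λ)
  set f := fun z : ℂ => complexMGFDual R.fst (z • Λ)
  set g := fun z : ℂ => complexMGFDual R'.fst (z • Λ)
  set u := fun z : ℂ => complexMGFDual R ((z • Λ).coprod M) * complexMGFDual R'.snd M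
  set v := fun z : ℂ => complexMGFDual R' ((z • Λ).coprod M) * complexMGFDual R.snd M
  have hf : AnalyticAt ℂ f z₀ :=
    (HasExpMoments.differentiable_smul (hR.map (.fst ℝ E F)) Λ).analyticAt z₀
  have hg : AnalyticAt ℂ g z₀ :=
    (HasExpMoments.differentiable_smul (hR'.map (.fst ℝ E F)) Λ).analyticAt z₀
  have hu : AnalyticAt ℂ u z₀ := ((hR.differentiable_smul_coprod Λ M).mul_const _).analyticAt z₀
  have hv : AnalyticAt ℂ v z₀ := ((hR'.differentiable_smul_coprod Λ M).mul_const _).analyticAt z₀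
  have hprod : v * f = u * g := by
    ext z
    have hz := congrArg (fun μ => complexMGFDual μ ((z • Λ).coprod M)) h
    simp only [complexMGFDual_conv, complexMGFDual_prod] at hz
    simp only [Pi.mul_apply, u, v, f, g]
    linear_combination -hz
  calc analyticOrderAt f z₀ ≤ analyticOrderAt v z₀ + analyticOrderAt f z₀ := le_add_self
    _ = analyticOrderAt u z₀ + analyticOrderAt g z₀ := by
      rw [← analyticOrderAt_mul hv hf, hprod, analyticOrderAt_mul hu hg]
    _ = analyticOrderAt g z₀ := by
      rw [hu.analyticOrderAt_eq_zero.2 (mul_ne_zero hjoint hsnd), zero_add]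

variable [CompleteSpace E] [CompleteSpace F]

lemma ext_prod_of_complexMGFDual {μ ν : Measure (E × F)} [IsFiniteMeasure μ] [IsFiniteMeasure ν]
    (h : ∀ Λ M, complexMGFDual μ (ContinuousLinearMap.coprod Λ M) =
      complexMGFDual ν (ContinuousLinearMap.coprod Λ M)) : μ = ν :=
  ext_of_complexMGFDual <| funext fun Φ => by
    simpa using h (Φ ∘L .inl ℝ E F) (Φ ∘L .inr ℝ E F)

lemma prod_conv_prod (μ μ' : Measure E) (ν ν' : Measure F) [IsFiniteMeasure μ] [IsFiniteMeasure μ']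
    [IsFiniteMeasure ν] [IsFiniteMeasure ν'] :
    μ.prod ν ∗ μ'.prod ν' = (μ ∗ μ').prod (ν ∗ ν') :=
  ext_prod_of_complexMGFDual fun Λ M => by
    simp only [complexMGFDual_conv, complexMGFDual_prod]
    ring

lemma conv_prod_marginals_eq {Q₁ Q₁' : Measure E} {Q₂ Q₂' : Measure F}
    [IsProbabilityMeasure Q₁] [IsProbabilityMeasure Q₁'] [IsProbabilityMeasure Q₂]
    [IsProbabilityMeasure Q₂'] (hR : HasExpMoments R) (hR' : HasExpMoments R')
    (h : R ∗ Q₁.prod Q₂ = R' ∗ Q₁'.prod Q₂') :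
    R ∗ R'.fst.prod R'.snd = R' ∗ R.fst.prod R.snd := by
  have hfst : R.fst ∗ Q₁ = R'.fst ∗ Q₁' := by
    simpa only [fst_conv, Measure.fst_prod] using congrArg Measure.fst h
  have hsnd : R.snd ∗ Q₂ = R'.snd ∗ Q₂' := by
    simpa only [snd_conv, Measure.snd_prod] using congrArg Measure.snd h
  have hprod : R.fst.prod R.snd ∗ Q₁.prod Q₂ = R'.fst.prod R'.snd ∗ Q₁'.prod Q₂' := by
    rw [prod_conv_prod, prod_conv_prod, hfst, hsnd]
  refine HasExpMoments.conv_right_cancel (ν := Q₁'.prod Q₂') ?_ ?_ ?_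
  · exact hR.conv ((hR'.map (.fst ℝ E F)).prod (hR'.map (.snd ℝ E F)))
  · exact hR'.conv ((hR.map (.fst ℝ E F)).prod (hR.map (.snd ℝ E F)))
  calc (R ∗ R'.fst.prod R'.snd) ∗ Q₁'.prod Q₂'
      = R ∗ (R.fst.prod R.snd ∗ Q₁.prod Q₂) := by rw [Measure.conv_assoc, hprod]
    _ = (R ∗ Q₁.prod Q₂) ∗ R.fst.prod R.snd := by
      rw [Measure.conv_comm (R.fst.prod _), Measure.conv_assoc]
    _ = (R' ∗ R.fst.prod R.snd) ∗ Q₁'.prod Q₂' := by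
      rw [h, Measure.conv_assoc, Measure.conv_comm (Q₁'.prod _), Measure.conv_assoc]

end Marginals

section Deconvolution

variable {E F : Type*} [NormedAddCommGroup E] [NormedSpace ℝ E] [MeasurableSpace E] [BorelSpace E]
  [FiniteDimensional ℝ E] [NormedAddCommGroup F] [NormedSpace ℝ F] [MeasurableSpace F]
  [BorelSpace F] [FiniteDimensional ℝ F]

lemma HasExpMoments.integrable_id {μ : Measure E} (hμ : HasExpMoments μ) :
    Integrable (fun x => x) μ := by
  have hL : ∀ L : StrongDual ℝ E, Integrable (fun x => L x) μ := fun L => by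
    refine ((hμ L).add (hμ (-L))).mono' (Continuous.aestronglyMeasurable (by fun_prop))
      (.of_forall fun x => ?_)
    rw [Real.norm_eq_abs]
    calc |L x| ≤ Real.exp |L x| := by linarith [Real.add_one_le_exp |L x|]
      _ ≤ _ := Real.exp_abs_le (L x)
  set b := Module.finBasis ℝ E
  have hsum := integrable_finsetSum Finset.univ fun i _ =>
    (hL (b.coord i).toContinuousLinearMap).smul_const (b i)
  simpa [b.sum_repr] using hsum

lemma HasExpMoments.hasDerivAt_zero {μ : Measure E} [IsProbabilityMeasure μ] (hμ : HasExpMoments μ)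
    (Λ : E →L[ℝ] ℂ) :
    HasDerivAt (fun z : ℂ => complexMGFDual μ (z • Λ)) (Λ (∫ x, x ∂μ)) 0 := by
  rw [← Λ.integral_comp_comm hμ.integrable_id]
  simpa using hμ.hasDerivAt 0 Λ 0

lemma eq_conv_dirac_of_exp_linear {μ ν : Measure E} [IsProbabilityMeasure μ]
    [IsProbabilityMeasure ν] (hμ : HasExpMoments μ) (hν : HasExpMoments ν)
    (h : ∀ Λ : E →L[ℝ] ℂ, ∃ c : ℂ, ∀ z : ℂ,
      complexMGFDual ν (z • Λ) = Complex.exp (c * z) * complexMGFDual μ (z • Λ)) :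
    ∃ m : E, ν = μ ∗ Measure.dirac m := by
  refine ⟨∫ x, x ∂ν - ∫ x, x ∂μ, ext_of_complexMGFDual (funext fun Λ => ?_)⟩
  obtain ⟨c, hc⟩ := h Λ
  have hmean : Λ (∫ x, x ∂ν) = c + Λ (∫ x, x ∂μ) := by
    refine (hν.hasDerivAt_zero Λ).unique ?_
    simp only [hc]
    refine ((((hasDerivAt_id (0 : ℂ)).const_mul c).cexp).mul (hμ.hasDerivAt_zero Λ)).congr_deriv ?_
    simp [complexMGFDual_zero_smul]
  rw [complexMGFDual_conv, complexMGFDual_dirac, map_sub, hmean, add_sub_cancel_right, mul_comm]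
  simpa using hc 1

variable {R R' : Measure (E × F)} [IsProbabilityMeasure R] [IsProbabilityMeasure R']

lemma exists_fst_eq_conv_dirac {ρ : ℝ} (hρ0 : 0 ≤ ρ) (hρ : ρ < 2) (hR : memM R ρ)
    (hR' : memM R' ρ) (hns : NonvanishingSections R) (hns' : NonvanishingSections R')
    (h : R ∗ R'.fst.prod R'.snd = R' ∗ R.fst.prod R.snd) :
    ∃ m : E, R'.fst = R.fst ∗ Measure.dirac m := by
  have hfst : memM R.fst ρ := hR.map hρ0 (.fst ℝ E F)
  have hfst' : memM R'.fst ρ := hR'.map hρ0 (.fst ℝ E F)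
  refine eq_conv_dirac_of_exp_linear hfst.hasExpMoments hfst'.hasExpMoments fun Λ => ?_
  exact exists_eq_exp_linear_mul (hfst.hasExpMoments.differentiable_smul Λ)
    (hfst'.hasExpMoments.differentiable_smul Λ) (complexMGFDual_zero_smul _ Λ)
    (complexMGFDual_zero_smul _ Λ) hρ (hfst.hasExpGrowth hρ0 Λ) (hfst'.hasExpGrowth hρ0 Λ)
    fun z => le_antisymm (analyticOrderAt_fst_le hR.hasExpMoments hR'.hasExpMoments hns h Λ z)
      (analyticOrderAt_fst_le hR'.hasExpMoments hR.hasExpMoments hns' h.symm Λ z)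

lemma exists_snd_eq_conv_dirac {ρ : ℝ} (hρ0 : 0 ≤ ρ) (hρ : ρ < 2) (hR : memM R ρ)
    (hR' : memM R' ρ) (hns : NonvanishingSections (R.map Prod.swap))
    (hns' : NonvanishingSections (R'.map Prod.swap))
    (h : R ∗ R'.fst.prod R'.snd = R' ∗ R.fst.prod R.snd) :
    ∃ m : F, R'.snd = R.snd ∗ Measure.dirac m := by
  set T := (ContinuousLinearEquiv.prodComm ℝ E F).toContinuousLinearMap
  have hT : memM (R.map Prod.swap) ρ := hR.map hρ0 T
  have hT' : memM (R'.map Prod.swap) ρ := hR'.map hρ0 T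
  have := Measure.isProbabilityMeasure_map (μ := R) measurable_swap.aemeasurable
  have := Measure.isProbabilityMeasure_map (μ := R') measurable_swap.aemeasurable
  have hconv := congrArg (Measure.map Prod.swap) h
  simp only [map_swap_conv, Measure.prod_swap] at hconv
  simpa only [Measure.fst_map_swap] using exists_fst_eq_conv_dirac hρ0 hρ hT hT' hns hns' (by
    simpa only [Measure.fst_map_swap, Measure.snd_map_swap] using hconv)

theorem exists_translation_of_conv_prod_eq {Q₁ Q₁' : Measure E} {Q₂ Q₂' : Measure F}
    [IsProbabilityMeasure Q₁] [IsProbabilityMeasure Q₁'] [IsProbabilityMeasure Q₂]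
    [IsProbabilityMeasure Q₂'] {ρ : ℝ} (hρ0 : 0 ≤ ρ) (hρ : ρ < 2) (hR : memM R ρ)
    (hR' : memM R' ρ) (hns : NonvanishingSections R) (hns' : NonvanishingSections R')
    (hswap : NonvanishingSections (R.map Prod.swap))
    (hswap' : NonvanishingSections (R'.map Prod.swap))
    (h : R ∗ Q₁.prod Q₂ = R' ∗ Q₁'.prod Q₂') :
    ∃ m : E × F, R' = R.map (fun x => x - m) ∧ Q₁' = Q₁.map (fun y => y + m.1) ∧
      Q₂' = Q₂.map (fun y => y + m.2) := by
  have hmarg := conv_prod_marginals_eq hR'.hasExpMoments hR.hasExpMoments h.symm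
  obtain ⟨m₁, hm₁⟩ := exists_fst_eq_conv_dirac hρ0 hρ hR' hR hns' hns hmarg
  obtain ⟨m₂, hm₂⟩ := exists_snd_eq_conv_dirac hρ0 hρ hR' hR hswap' hswap hmarg
  have hRm : R = R' ∗ Measure.dirac (m₁, m₂) := by
    refine HasExpMoments.conv_right_cancel (ν := R'.fst.prod R'.snd) hR.hasExpMoments
      (hR'.hasExpMoments.conv (.dirac _)) ?_
    rw [← hmarg, hm₁, hm₂, ← prod_conv_prod, Measure.dirac_prod_dirac, Measure.conv_assoc,
      Measure.conv_comm (Measure.dirac _)]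
  have hQ : Q₁'.prod Q₂' = (Q₁ ∗ Measure.dirac m₁).prod (Q₂ ∗ Measure.dirac m₂) := by
    refine hR'.hasExpMoments.conv_left_cancel ?_
    rw [← h, ← prod_conv_prod, Measure.dirac_prod_dirac, Measure.conv_comm (Q₁.prod Q₂),
      ← Measure.conv_assoc, ← hRm]
  have hfst := congrArg Measure.fst hQ
  have hsnd := congrArg Measure.snd hQ
  simp only [Measure.fst_prod, Measure.snd_prod] at hfst hsnd
  rw [Measure.conv_dirac] at hfst hsnd
  refine ⟨(m₁, m₂), ?_, hfst, hsnd⟩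
  rw [hRm, Measure.conv_dirac, Measure.map_map (by fun_prop) (by fun_prop)]
  simp [Function.comp_def]

end Deconvolution

/-! ### Linear mixing of independent sources -/

section LinearMixing

lemma eventually_complexMGFDual_ne_zero {μ : Measure ℝ} [IsProbabilityMeasure μ]
    (hμ : HasExpMoments μ) (Λ₀ : ℝ →L[ℝ] ℂ) {Λ₁ : ℝ →L[ℝ] ℂ} (h : Λ₁ 1 ≠ 0) (z₀ : ℂ) :
    ∀ᶠ z in 𝓝[≠] z₀, complexMGFDual μ (Λ₀ + z • Λ₁) ≠ 0 := by
  refine eventually_ne_zero_of_differentiable (hμ.differentiable_add_smul Λ₀ Λ₁)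
    (a := -(Λ₀ 1 / Λ₁ 1)) ?_ z₀
  have hzero : Λ₀ + -(Λ₀ 1 / Λ₁ 1) • Λ₁ = (0 : ℂ) • Λ₁ := by
    ext
    simp [h]
  rw [hzero, complexMGFDual_zero_smul]
  exact one_ne_zero

variable {E F : Type*} [NormedAddCommGroup E] [NormedSpace ℝ E] [MeasurableSpace E] [BorelSpace E]
  [NormedAddCommGroup F] [NormedSpace ℝ F] [MeasurableSpace F] [BorelSpace F]
  [FiniteDimensional ℝ F]

lemma nonvanishingSections_map_pi {ι : Type*} [Fintype ι] [DecidableEq ι] {μ : ι → Measure ℝ}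
    [∀ j, IsProbabilityMeasure (μ j)] (hμ : ∀ j, HasExpMoments (μ j)) (T : (ι → ℝ) →L[ℝ] E × F)
    (hT : ∀ j, (T (Pi.single j 1)).2 ≠ 0) : NonvanishingSections ((Measure.pi μ).map T) := by
  intro Λ
  obtain ⟨g, hg⟩ := Module.exists_dual_forall_apply_ne_zero (K := ℝ) _ hT
  set M : F →L[ℝ] ℂ := g.toContinuousLinearMap.smulRight 1
  have hsplit : ∀ (j : ι) (w : ℂ), (Λ.coprod (w • M) ∘L T) ∘L .single ℝ (fun _ => ℝ) j =
      (Λ.coprod 0 ∘L T) ∘L .single ℝ (fun _ => ℝ) j +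
        w • (ContinuousLinearMap.coprod 0 M ∘L T) ∘L .single ℝ (fun _ => ℝ) j := fun j w => by
    ext
    simp
  have hfactor : ∀ j, ∀ᶠ w in 𝓝[≠] (0 : ℂ),
      complexMGFDual (μ j) ((Λ.coprod (w • M) ∘L T) ∘L .single ℝ (fun _ => ℝ) j) ≠ 0 := fun j => by
    simp only [hsplit]
    exact eventually_complexMGFDual_ne_zero (hμ j) _ (by simpa [M] using hg j) 0
  obtain ⟨w, hw⟩ := (eventually_all.2 hfactor).exists
  refine ⟨w • M, ?_⟩
  rw [complexMGFDual_map, complexMGFDual_pi]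
  exact Finset.prod_ne_zero_iff.2 fun j _ => hw j

variable [FiniteDimensional ℝ E]

lemma nonvanishingSections_map_swap_map_pi {ι : Type*} [Fintype ι] [DecidableEq ι]
    {μ : ι → Measure ℝ} [∀ j, IsProbabilityMeasure (μ j)] (hμ : ∀ j, HasExpMoments (μ j))
    (T : (ι → ℝ) →L[ℝ] E × F) (hT : ∀ j, (T (Pi.single j 1)).1 ≠ 0) :
    NonvanishingSections (((Measure.pi μ).map T).map Prod.swap) := by
  rw [Measure.map_map measurable_swap T.continuous.measurable]
  exact nonvanishingSections_map_pi hμ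
    ((ContinuousLinearEquiv.prodComm ℝ E F).toContinuousLinearMap ∘L T) hT

theorem exists_translation_of_map_pi_conv_prod_eq {ι ι' : Type*}
    [Fintype ι] [DecidableEq ι] [Fintype ι'] [DecidableEq ι'] {μ : ι → Measure ℝ}
    {μ' : ι' → Measure ℝ} [∀ j, IsProbabilityMeasure (μ j)] [∀ j, IsProbabilityMeasure (μ' j)]
    {ρ : ℝ} (hρ : ρ < 2) (hμ : ∀ j, memM (μ j) ρ) (hμ' : ∀ j, memM (μ' j) ρ)
    {Q₁ Q₁' : Measure E} {Q₂ Q₂' : Measure F} [IsProbabilityMeasure Q₁] [IsProbabilityMeasure Q₁']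
    [IsProbabilityMeasure Q₂] [IsProbabilityMeasure Q₂'] (T : (ι → ℝ) →L[ℝ] E × F)
    (T' : (ι' → ℝ) →L[ℝ] E × F)
    (hT₁ : ∀ j, (T (Pi.single j 1)).1 ≠ 0) (hT₂ : ∀ j, (T (Pi.single j 1)).2 ≠ 0)
    (hT₁' : ∀ j, (T' (Pi.single j 1)).1 ≠ 0) (hT₂' : ∀ j, (T' (Pi.single j 1)).2 ≠ 0)
    (h : (Measure.pi μ).map T ∗ Q₁.prod Q₂ = (Measure.pi μ').map T' ∗ Q₁'.prod Q₂') :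
    ∃ m : E × F, (Measure.pi μ').map T' = ((Measure.pi μ).map T).map (fun x => x - m) ∧
      Q₁' = Q₁.map (fun y => y + m.1) ∧ Q₂' = Q₂.map (fun y => y + m.2) := by
  have hmax : ∀ {ν : Measure ℝ}, memM ν ρ → memM ν (max ρ 0) := fun hν =>
    hν.mono (le_max_left ρ 0)
  have := Measure.isProbabilityMeasure_map (μ := Measure.pi μ) T.continuous.aemeasurable
  have := Measure.isProbabilityMeasure_map (μ := Measure.pi μ') T'.continuous.aemeasurable
  exact exists_translation_of_conv_prod_eq (le_max_right ρ 0) (max_lt hρ two_pos)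
    ((memM.pi (fun j => hmax (hμ j)) (le_max_right ρ 0)).map (le_max_right ρ 0) T)
    ((memM.pi (fun j => hmax (hμ' j)) (le_max_right ρ 0)).map (le_max_right ρ 0) T')
    (nonvanishingSections_map_pi (fun j => (hμ j).hasExpMoments) T hT₂)
    (nonvanishingSections_map_pi (fun j => (hμ' j).hasExpMoments) T' hT₂')
    (nonvanishingSections_map_swap_map_pi (fun j => (hμ j).hasExpMoments) T hT₁)
    (nonvanishingSections_map_swap_map_pi (fun j => (hμ' j).hasExpMoments) T' hT₁') h

end LinearMixing

section Coordinates

variable {d : ℕ} {I J : Finset (Fin d)}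

lemma glue_restrict (hIJ : I ∪ J = Finset.univ) (v : Fin d → ℝ) :
    glue I J (fun i => v i) (fun i => v i) = v := by
  ext i
  have hi : i ∈ I ∪ J := hIJ ▸ Finset.mem_univ i
  by_cases h : i ∈ I
  · simp [glue, h]
  · simp [glue, h, (Finset.mem_union.1 hi).resolve_left h]

lemma restrict_glue (hdisj : Disjoint I J) (p : (I → ℝ) × (J → ℝ)) :
    ((fun i : I => glue I J p.1 p.2 i, fun i : J => glue I J p.1 p.2 i) :
      (I → ℝ) × (J → ℝ)) = p := by
  ext i
  · simp [glue]
  · simp [glue, Finset.disjoint_right.1 hdisj i.2]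

/-- The splitting `x ↦ (x_I, x_J)` of a vector along the partition `I ∪ J`, with inverse `glue`. -/
noncomputable def splitCoords (hIJ : I ∪ J = Finset.univ) (hdisj : Disjoint I J) :
    (Fin d → ℝ) ≃L[ℝ] (I → ℝ) × (J → ℝ) :=
  LinearEquiv.toContinuousLinearEquiv
    { toFun := fun x => (fun i => x i, fun i => x i)
      map_add' := fun _ _ => rfl
      map_smul' := fun _ _ => rfl
      invFun := fun p => glue I J p.1 p.2
      left_inv := glue_restrict hIJ
      right_inv := restrict_glue hdisj }

lemma map_glue_map_splitCoords (hIJ : I ∪ J = Finset.univ) (hdisj : Disjoint I J)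
    (ν : Measure ((I → ℝ) × (J → ℝ))) :
    (ν.map fun p => glue I J p.1 p.2).map (splitCoords hIJ hdisj) = ν :=
  (splitCoords hIJ hdisj).toHomeomorph.toMeasurableEquiv.map_map_symm

lemma map_splitCoords_mconv (hIJ : I ∪ J = Finset.univ) (hdisj : Disjoint I J)
    (μ ν : Measure (Fin d → ℝ)) [SFinite μ] [SFinite ν] :
    (mconv μ ν).map (splitCoords hIJ hdisj) =
      μ.map (splitCoords hIJ hdisj) ∗ ν.map (splitCoords hIJ hdisj) :=
  Measure.map_conv_continuousLinearMap (splitCoords hIJ hdisj).toContinuousLinearMap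

lemma map_mulVec_map_splitCoords {ι : Type*} [Fintype ι] (hIJ : I ∪ J = Finset.univ)
    (hdisj : Disjoint I J) (A : Matrix (Fin d) ι ℝ) (μ : Measure (ι → ℝ)) :
    (μ.map fun s => A.mulVec s).map (splitCoords hIJ hdisj) =
      μ.map ((splitCoords hIJ hdisj).toContinuousLinearMap ∘L
        A.mulVecLin.toContinuousLinearMap) :=
  Measure.map_map (splitCoords hIJ hdisj).continuous.measurable
    A.mulVecLin.toContinuousLinearMap.continuous.measurable

lemma map_sub_map_splitCoords (hIJ : I ∪ J = Finset.univ) (hdisj : Disjoint I J)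
    (μ : Measure (Fin d → ℝ)) (m : Fin d → ℝ) :
    (μ.map fun x => x - m).map (splitCoords hIJ hdisj) =
      (μ.map (splitCoords hIJ hdisj)).map fun x => x - splitCoords hIJ hdisj m := by
  rw [Measure.map_map (splitCoords hIJ hdisj).continuous.measurable (by fun_prop),
    Measure.map_map (by fun_prop) (splitCoords hIJ hdisj).continuous.measurable]
  simp only [Function.comp_def, map_sub]

lemma restrict_mulVec_single_ne_zero {m n : Type*} [Fintype n] [DecidableEq n] {A : Matrix m n ℝ}
    {K : Finset m} {j : n} (h : ∃ i ∈ K, A i j ≠ 0) :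
    (fun i : K => A.mulVec (Pi.single j 1) i) ≠ 0 := fun h0 => by
  obtain ⟨i, hi, hne⟩ := h
  exact hne (by simpa using congrFun h0 ⟨i, hi⟩)

end Coordinates

theorem stmt1_general {d : ℕ} {ι ι' : Type*} [Fintype ι] [Fintype ι']
    (A : Matrix (Fin d) ι ℝ) (A' : Matrix (Fin d) ι' ℝ)
    {I J : Finset (Fin d)} (hIJ : I ∪ J = Finset.univ) (hdisj : Disjoint I J)
    (hAI : ∀ j, ∃ i ∈ I, A i j ≠ 0) (hAI' : ∀ j, ∃ i ∈ I, A' i j ≠ 0)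
    (hAJ : ∀ j, ∃ i ∈ J, A i j ≠ 0) (hAJ' : ∀ j, ∃ i ∈ J, A' i j ≠ 0)
    (μ : ι → Measure ℝ) (μ' : ι' → Measure ℝ)
    [∀ j, IsProbabilityMeasure (μ j)] [∀ j, IsProbabilityMeasure (μ' j)]
    {ρ : ℝ} (hρ : ρ < 2) (hμ : ∀ j, memM1 (μ j) ρ) (hμ' : ∀ j, memM1 (μ' j) ρ)
    (QI QI' : Measure (I → ℝ)) (QJ QJ' : Measure (J → ℝ))
    [IsProbabilityMeasure QI] [IsProbabilityMeasure QI']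
    [IsProbabilityMeasure QJ] [IsProbabilityMeasure QJ']
    (h : mconv ((Measure.pi μ).map fun s => A.mulVec s)
        ((QI.prod QJ).map fun p => glue I J p.1 p.2) =
      mconv ((Measure.pi μ').map fun s => A'.mulVec s)
        ((QI'.prod QJ').map fun p => glue I J p.1 p.2)) :
    ∃ m : Fin d → ℝ,
      (Measure.pi μ').map (fun s => A'.mulVec s) =
        ((Measure.pi μ).map fun s => A.mulVec s).map (fun x => x - m) ∧
      QI' = QI.map (fun y => y + fun i => m i.1) ∧
      QJ' = QJ.map (fun y => y + fun i => m i.1) := by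
  classical
  have hsplit := congrArg (Measure.map (splitCoords hIJ hdisj)) h
  rw [map_splitCoords_mconv, map_splitCoords_mconv, map_glue_map_splitCoords,
    map_glue_map_splitCoords, map_mulVec_map_splitCoords, map_mulVec_map_splitCoords] at hsplit
  obtain ⟨m', hR, hI, hJ⟩ := exists_translation_of_map_pi_conv_prod_eq hρ (fun j => (hμ j).memM)
    (fun j => (hμ' j).memM) _ _ (fun j => restrict_mulVec_single_ne_zero (hAI j))
    (fun j => restrict_mulVec_single_ne_zero (hAJ j))
    (fun j => restrict_mulVec_single_ne_zero (hAI' j))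
    (fun j => restrict_mulVec_single_ne_zero (hAJ' j)) hsplit
  obtain ⟨m, rfl⟩ := (splitCoords hIJ hdisj).surjective m'
  refine ⟨m, ?_, hI, hJ⟩
  refine (splitCoords hIJ hdisj).toHomeomorph.toMeasurableEquiv.map_measurableEquiv_injective ?_
  refine (map_mulVec_map_splitCoords hIJ hdisj A' _).trans (hR.trans ?_)
  rw [← map_mulVec_map_splitCoords, ← map_sub_map_splitCoords]
  rfl

theorem stmt1 (d q : ℕ) (hd : 1 ≤ d) (hq : 1 ≤ q)
    (A At : Matrix (Fin d) (Fin q) ℝ)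
    (I J : Finset (Fin d)) (hIJ : I ∪ J = Finset.univ) (hdisj : Disjoint I J)
    (hIne : I.Nonempty) (hJne : J.Nonempty)
    (hAI : ∀ j : Fin q, ∃ i ∈ I, A i j ≠ 0)
    (hAtI : ∀ j : Fin q, ∃ i ∈ I, At i j ≠ 0)
    (hAJ : ∀ j : Fin q, ∃ i ∈ J, A i j ≠ 0)
    (hAtJ : ∀ j : Fin q, ∃ i ∈ J, At i j ≠ 0)
    (μS μSt : Fin q → Measure ℝ)
    [∀ j, IsProbabilityMeasure (μS j)] [∀ j, IsProbabilityMeasure (μSt j)]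
    (ρ : ℝ) (hρ : ρ < 2)
    (hS : ∀ j, memM1 (μS j) ρ) (hSt : ∀ j, memM1 (μSt j) ρ)
    (QI QtI : Measure (↥I → ℝ)) (QJ QtJ : Measure (↥J → ℝ))
    [IsProbabilityMeasure QI] [IsProbabilityMeasure QtI]
    [IsProbabilityMeasure QJ] [IsProbabilityMeasure QtJ]
    (R Rt Q Qt : Measure (Fin d → ℝ))
    (hR : R = (Measure.pi μS).map (fun s => A.mulVec s))
    (hRt : Rt = (Measure.pi μSt).map (fun s => At.mulVec s))
    (hQ : Q = (QI.prod QJ).map (fun p => glue I J p.1 p.2))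
    (hQt : Qt = (QtI.prod QtJ).map (fun p => glue I J p.1 p.2))
    (heq : mconv R Q = mconv Rt Qt) :
    ∃ m : Fin d → ℝ,
      Rt = R.map (fun x => x - m) ∧
      QtI = QI.map (fun y => y + fun i => m i.1) ∧
      QtJ = QJ.map (fun y => y + fun i => m i.1) := by
  subst hR hRt hQ hQt
  exact stmt1_general A At hIJ hdisj hAI hAtI hAJ hAtJ μS μSt hρ hS hSt QI QtI QJ QtJ heq

end Stmt1
end

section
/- Let d1 ≥ 1 and let R⁽¹⁾ and R̃⁽¹⁾ be probability measures on ℝ^{d1} such that, for some ρ < 2, both belong to M^{d1}_ρ. Let R (resp. R̃) be the pushforward of R⁽¹⁾ (resp. R̃⁽¹⁾) under the diagonal map x ↦ (x, x) from ℝ^{d1} to ℝ^{d1} × ℝ^{d1}. Let Q = Q⁽¹⁾ ⊗ Q⁽²⁾ and Q̃ = Q̃⁽¹⁾ ⊗ Q̃⁽²⁾ be products of probability measures on ℝ^{d1}. If R * Q = R̃ * Q̃ (convolution of measures on ℝ^{2d1}), then there exists m = (m1, m2) ∈ ℝ^{d1} × ℝ^{d1} such that R̃ is the pushforward of R under x ↦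 x − m, Q̃⁽¹⁾ is the pushforward of Q⁽¹⁾ under y ↦ y + m1, and Q̃⁽²⁾ is the pushforward of Q⁽²⁾ under y ↦ y + m2. -/
/- STATEMENT 2: identifiability up to translation for deconvolution with repeated
   measurements: X = (X⁽¹⁾, X⁽¹⁾) with X⁽¹⁾ ~ R⁽¹⁾ ∈ M^{d1}_ρ, ρ < 2, and unknown
   product noise. -/

namespace Stmt2

open MeasureTheory

/-- Convolution of two measures: the law of the sum of independent draws. -/
noncomputable def mconv {E : Type*} [MeasurableSpace E] [Add E] (μ ν : Measure E) :
    Measure E :=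
  (μ.prod ν).map (fun p => p.1 + p.2)

/-- Membership in M^{d}_ρ (Euclidean norm on ℝ^d). -/
def memM {d : ℕ} (μ : Measure (Fin d → ℝ)) (ρ : ℝ) : Prop :=
  ∃ A B : ℝ, 0 < A ∧ 0 < B ∧ ∀ lam : Fin d → ℝ,
    ∫⁻ x, ENNReal.ofReal (Real.exp (∑ a, lam a * x a)) ∂μ ≤
      ENNReal.ofReal (A * Real.exp (B * Real.sqrt (∑ a, lam a ^ 2) ^ ρ))

/-!
Along a line `ℝ L` of the dual, the hypothesis reads
`f (u + v) * (a₁ u * a₂ v) = g (u + v) * (b₁ u * b₂ v)`, with `f`, `g` the characteristic functions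
of the two signals and `aᵢ`, `bᵢ` those of the noises. Setting `v = 0` or `u = 0` shows that near
the origin `f / g`, `b₁ / a₁` and `b₂ / a₂` are one and the same function, which is therefore
multiplicative, hence an exponential `u ↦ exp (c * u)`. The signals have exponential moments, so
`f` and `g` are real-analytic: the identity `f = exp (c * ·) * g` holds on the whole line, and `g`,
vanishing on no open interval, can be cancelled to reach `b₁` and `b₂`. Finally `c` is `I` times
`L` of the difference of the two means, so multiplying by the exponential is a translation.
-/

section Rigidity

open Filter Topology

theorem dense_ne_zero_of_analyticOnNhd {𝕜 E F : Type*} [NontriviallyNormedField 𝕜]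
    [NormedAddCommGroup E] [NormedSpace 𝕜 E] [PreconnectedSpace E]
    [NormedAddCommGroup F] [NormedSpace 𝕜 F] {f : E → F} {x₀ : E}
    (hf : AnalyticOnNhd 𝕜 f Set.univ) (hx₀ : f x₀ ≠ 0) : Dense {x | f x ≠ 0} := by
  intro x
  by_contra hx
  have hzero : f =ᶠ[𝓝 x] 0 := by
    simpa [mem_closure_iff_frequently, EventuallyEq] using hx
  exact hx₀ (congrFun (hf.eq_of_eventuallyEq analyticOnNhd_const hzero) x₀)

theorem hasDerivAt_cexp_const_mul_ofReal (c : ℂ) (x : ℝ) :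
    HasDerivAt (fun x : ℝ => Complex.exp (c * x)) (Complex.exp (c * x) * c) x := by
  simpa using ((Complex.ofRealCLM.hasDerivAt (x := x)).const_mul c).cexp

theorem eventuallyEq_cexp_of_map_add_eq_mul {q : ℝ → ℂ} {c : ℂ} (hq : HasDerivAt q c 0)
    (hq0 : q 0 = 1) (hmul : ∀ᶠ u in 𝓝 (0 : ℝ), ∀ᶠ v in 𝓝 (0 : ℝ), q (u + v) = q u * q v) :
    q =ᶠ[𝓝 0] fun u : ℝ => Complex.exp (c * u) := by
  have hasDeriv_q : ∀ᶠ u in 𝓝 (0 : ℝ), HasDerivAt q (q u * c) u := by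
    filter_upwards [hmul] with u hu
    have hshift : HasDerivAt (fun v => q (u + v)) (q u * c) 0 :=
      (hq.const_mul (q u)).congr_of_eventuallyEq hu
    refine (HasDerivAt.comp_sub_const u u (by simpa using hshift)).congr_of_eventuallyEq
      (.of_forall fun w => ?_)
    simp
  obtain ⟨δ, hδ, hball⟩ := Metric.eventually_nhds_iff_ball.1 hasDeriv_q
  have hasDeriv_quot (x : ℝ) (hx : x ∈ Metric.ball (0 : ℝ) δ) :
      HasDerivAt (fun x : ℝ => q x * Complex.exp (-c * x)) 0 x :=
    ((hball x hx).mul (hasDerivAt_cexp_const_mul_ofReal (-c) x)).congr_deriv (by ring)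
  filter_upwards [Metric.ball_mem_nhds 0 hδ] with x hx
  have hconst : q x * Complex.exp (-c * x) = 1 := by
    simpa [hq0] using Metric.isOpen_ball.is_const_of_deriv_eq_zero
      (convex_ball (0 : ℝ) δ).isPreconnected
      (fun y hy => (hasDeriv_quot y hy).differentiableAt.differentiableWithinAt)
      (fun y hy => (hasDeriv_quot y hy).deriv) hx (Metric.mem_ball_self hδ)
  rwa [neg_mul, Complex.exp_neg, mul_inv_eq_one₀ (Complex.exp_ne_zero _)] at hconst

theorem eq_cexp_mul_of_div_map_add_eq_mul {f g : ℝ → ℂ} {c d : ℂ}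
    (hf : AnalyticOnNhd ℝ f Set.univ) (hg : AnalyticOnNhd ℝ g Set.univ)
    (hf0 : f 0 = 1) (hg0 : g 0 = 1) (hfc : HasDerivAt f c 0) (hgd : HasDerivAt g d 0)
    (hmul : ∀ᶠ u in 𝓝 (0 : ℝ), ∀ᶠ v in 𝓝 (0 : ℝ),
      f (u + v) / g (u + v) = f u / g u * (f v / g v)) :
    f = fun u : ℝ => Complex.exp ((c - d) * u) * g u := by
  have hquot : HasDerivAt (fun u => f u / g u) (c - d) 0 :=
    (hfc.div hgd (by simp [hg0])).congr_deriv (by simp [hf0, hg0])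
  have hlocal : f =ᶠ[𝓝 0] fun u : ℝ => Complex.exp ((c - d) * u) * g u := by
    filter_upwards [eventuallyEq_cexp_of_map_add_eq_mul hquot (by simp [hf0, hg0]) hmul,
      hgd.continuousAt.eventually_ne (by simp [hg0] : g 0 ≠ 0)] with u hu hgu
    exact (div_eq_iff hgu).1 hu
  have hexp : AnalyticOnNhd ℝ (fun u : ℝ => Complex.exp ((c - d) * u)) Set.univ := fun u _ =>
    analyticAt_cexp.restrictScalars.comp (f := fun u : ℝ => (c - d) * u)
      (analyticAt_const.mul (Complex.ofRealCLM.analyticAt u))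
  exact hf.eq_of_eventuallyEq (hexp.mul hg) hlocal

theorem eventually_div_map_add_eq_mul {G 𝕜 : Type*} [AddZeroClass G] [TopologicalSpace G]
    [ContinuousAdd G] [Field 𝕜] [TopologicalSpace 𝕜] [T1Space 𝕜] {f g a₁ a₂ b₁ b₂ : G → 𝕜}
    (hg : Continuous g) (ha₁ : ContinuousAt a₁ 0) (ha₂ : ContinuousAt a₂ 0)
    (hg0 : g 0 ≠ 0) (ha₁0 : a₁ 0 ≠ 0) (ha₂0 : a₂ 0 ≠ 0)
    (h₁ : ∀ u, f u * a₁ u = g u * b₁ u) (h₂ : ∀ v, f v * a₂ v = g v * b₂ v)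
    (h : ∀ u v, f (u + v) * (a₁ u * a₂ v) = g (u + v) * (b₁ u * b₂ v)) :
    ∀ᶠ u in 𝓝 (0 : G), ∀ᶠ v in 𝓝 (0 : G),
      f (u + v) / g (u + v) = f u / g u * (f v / g v) := by
  have hg_ne : ∀ᶠ u in 𝓝 (0 : G), g u ≠ 0 := hg.continuousAt.eventually_ne hg0
  filter_upwards [hg_ne, ha₁.eventually_ne ha₁0] with u hgu hau
  have hg_add_ne : ∀ᶠ v in 𝓝 (0 : G), g (u + v) ≠ 0 :=
    (hg.comp (continuous_const_add u)).continuousAt.eventually_ne (by simpa using hgu)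
  filter_upwards [hg_ne, ha₂.eventually_ne ha₂0, hg_add_ne] with v hgv hav hguv
  have hfu : f u / g u = b₁ u / a₁ u := by
    rw [div_eq_div_iff hgu hau, h₁, mul_comm]
  have hfv : f v / g v = b₂ v / a₂ v := by
    rw [div_eq_div_iff hgv hav, h₂, mul_comm]
  rw [hfu, hfv, div_mul_div_comm, div_eq_div_iff hguv (mul_ne_zero hau hav), h, mul_comm]

theorem eq_mul_of_mul_eq_mul_of_dense {X M : Type*} [TopologicalSpace X] [CommMonoidWithZero M]
    [IsLeftCancelMulZero M] [TopologicalSpace M] [ContinuousMul M] [T2Space M] {f g e a b : X → M}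
    (hg : Dense {x | g x ≠ 0}) (he : Continuous e) (ha : Continuous a) (hb : Continuous b)
    (hfg : f = fun x => e x * g x) (h : ∀ x, f x * a x = g x * b x) :
    b = fun x => e x * a x := by
  refine Continuous.ext_on hg hb (he.mul ha) fun x hx => mul_left_cancel₀ hx ?_
  rw [← h, hfg, mul_assoc, mul_left_comm]

theorem eq_cexp_mul_of_mul_eq_mul {f g a₁ a₂ b₁ b₂ : ℝ → ℂ} {c d : ℂ}
    (hf : AnalyticOnNhd ℝ f Set.univ) (hg : AnalyticOnNhd ℝ g Set.univ)
    (hfc : HasDerivAt f c 0) (hgd : HasDerivAt g d 0)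
    (ha₁ : Continuous a₁) (ha₂ : Continuous a₂) (hb₁ : Continuous b₁) (hb₂ : Continuous b₂)
    (hf0 : f 0 = 1) (hg0 : g 0 = 1)
    (ha₁0 : a₁ 0 = 1) (ha₂0 : a₂ 0 = 1) (hb₁0 : b₁ 0 = 1) (hb₂0 : b₂ 0 = 1)
    (h : ∀ u v, f (u + v) * (a₁ u * a₂ v) = g (u + v) * (b₁ u * b₂ v)) :
    (f = fun u : ℝ => Complex.exp ((c - d) * u) * g u) ∧
      (b₁ = fun u : ℝ => Complex.exp ((c - d) * u) * a₁ u) ∧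
      b₂ = fun u : ℝ => Complex.exp ((c - d) * u) * a₂ u := by
  have h₁ (u : ℝ) : f u * a₁ u = g u * b₁ u := by simpa [ha₂0, hb₂0] using h u 0
  have h₂ (v : ℝ) : f v * a₂ v = g v * b₂ v := by simpa [ha₁0, hb₁0] using h 0 v
  have hg_cont : Continuous g := continuousOn_univ.1 hg.continuousOn
  have hfg := eq_cexp_mul_of_div_map_add_eq_mul hf hg hf0 hg0 hfc hgd <|
    eventually_div_map_add_eq_mul hg_cont ha₁.continuousAt ha₂.continuousAt
      (by simp [hg0]) (by simp [ha₁0]) (by simp [ha₂0]) h₁ h₂ h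
  have hdense : Dense {u | g u ≠ 0} :=
    dense_ne_zero_of_analyticOnNhd hg (x₀ := 0) (by simp [hg0])
  have hexp : Continuous fun u : ℝ => Complex.exp ((c - d) * u) := by fun_prop
  exact ⟨hfg, eq_mul_of_mul_eq_mul_of_dense hdense hexp ha₁ hb₁ hfg h₁,
    eq_mul_of_mul_eq_mul_of_dense hdense hexp ha₂ hb₂ hfg h₂⟩

end Rigidity

section Measure

variable {E F : Type*} [MeasurableSpace E] [MeasurableSpace F]

theorem mconv_eq_conv [AddMonoid E] (μ ν : Measure E) : mconv μ ν = μ.conv ν := rfl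

theorem map_map_diag (μ : Measure E) {f : E → F} (hf : Measurable f) :
    (μ.map f).map (fun y => (y, y)) =
      (μ.map (fun x => (x, x))).map (fun p => (f p.1, f p.2)) := by
  rw [Measure.map_map (by fun_prop) hf, Measure.map_map (by fun_prop) (by fun_prop)]
  rfl

end Measure

section CharFunDual

open ProbabilityTheory

variable {E : Type*} [NormedAddCommGroup E] [NormedSpace ℝ E] [MeasurableSpace E]

theorem charFunDual_zero (μ : Measure E) : charFunDual μ 0 = μ.real Set.univ := by
  simp [charFunDual_apply]

section OpensMeasurable

variable [OpensMeasurableSpace E]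

theorem continuous_charFunDual_smul (μ : Measure E) [IsFiniteMeasure μ] (L : StrongDual ℝ E) :
    Continuous fun u : ℝ => charFunDual μ (u • L) := by
  simp_rw [← charFun_map_eq_charFunDual_smul]
  fun_prop

theorem hasDerivAt_charFunDual_smul_zero {μ : Measure E} [IsFiniteMeasure μ]
    {L : StrongDual ℝ E} (hL : Integrable L μ) :
    HasDerivAt (fun u : ℝ => charFunDual μ (u • L)) (Complex.I * (∫ x, L x ∂μ : ℝ)) 0 := by
  have hmem : MemLp id (1 : ℕ) (μ.map L) := by
    rw [Nat.cast_one, memLp_one_iff_integrable]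
    exact (integrable_map_measure (by fun_prop) (by fun_prop)).2 hL
  have hderiv : deriv (charFun (μ.map L)) 0 = Complex.I * (∫ x, L x ∂μ : ℝ) := by
    rw [← iteratedDeriv_one, iteratedDeriv_charFun_zero hmem, pow_one,
      integral_map (by fun_prop) (by fun_prop)]
    simp only [pow_one]
  simp_rw [← charFun_map_eq_charFunDual_smul, ← hderiv]
  exact ((contDiff_charFun hmem).differentiable (by simp) 0).hasDerivAt

theorem analyticOnNhd_charFunDual_smul {μ : Measure E} {L : StrongDual ℝ E}
    (hL : 0 ∈ interior (integrableExpSet L μ)) :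
    AnalyticOnNhd ℝ (fun u : ℝ => charFunDual μ (u • L)) Set.univ := by
  simp_rw [← charFun_map_eq_charFunDual_smul,
    ← complexMGF_mul_I (show AEMeasurable L μ by fun_prop)]
  intro u _
  have hline : AnalyticAt ℝ (fun u : ℝ => (u : ℂ) * Complex.I) u :=
    (Complex.ofRealCLM.analyticAt u).mul analyticAt_const
  have hmgf : AnalyticAt ℂ (complexMGF L μ) (u * Complex.I) :=
    analyticAt_complexMGF (by simpa using hL)
  exact hmgf.restrictScalars.comp (f := fun u : ℝ => u * Complex.I) hline

end OpensMeasurable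

variable [BorelSpace E] [SecondCountableTopology E]

theorem charFunDual_mconv_diag (R Q₁ Q₂ : Measure E)
    [IsFiniteMeasure R] [IsFiniteMeasure Q₁] [IsFiniteMeasure Q₂] (L₁ L₂ : StrongDual ℝ E) :
    charFunDual (mconv (R.map (fun x => (x, x))) (Q₁.prod Q₂)) (L₁.coprod L₂) =
      charFunDual R (L₁ + L₂) * (charFunDual Q₁ L₁ * charFunDual Q₂ L₂) := by
  have hdiag : charFunDual (R.map (fun x => (x, x))) (L₁.coprod L₂) = charFunDual R (L₁ + L₂) :=
    (charFunDual_map ((ContinuousLinearMap.id ℝ E).prod (.id ℝ E)) _).trans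
      (congrArg _ (by ext x; simp))
  rw [mconv_eq_conv, charFunDual_conv, hdiag, charFunDual_prod,
    ContinuousLinearMap.coprod_comp_inl, ContinuousLinearMap.coprod_comp_inr]

variable [CompleteSpace E]

theorem eq_map_add_const_of_charFunDual_eq {μ ν : Measure E} [IsFiniteMeasure μ]
    [IsFiniteMeasure ν] {m : E}
    (h : ∀ L, charFunDual ν L = Complex.exp (L m * Complex.I) * charFunDual μ L) :
    ν = μ.map (fun y => y + m) :=
  Measure.ext_of_charFunDual <| funext fun L => by
    rw [h, charFunDual_map_add_const, mul_comm]

variable {R S Q₁ P₁ Q₂ P₂ : Measure E}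
  [IsProbabilityMeasure R] [IsProbabilityMeasure S]
  [IsProbabilityMeasure Q₁] [IsProbabilityMeasure P₁]
  [IsProbabilityMeasure Q₂] [IsProbabilityMeasure P₂]

theorem charFunDual_eq_of_mconv_diag_eq {L : StrongDual ℝ E}
    (hR : Integrable (fun x => x) R) (hS : Integrable (fun x => x) S)
    (hRL : 0 ∈ interior (integrableExpSet L R)) (hSL : 0 ∈ interior (integrableExpSet L S))
    (heq : mconv (R.map (fun x => (x, x))) (Q₁.prod Q₂) =
      mconv (S.map (fun x => (x, x))) (P₁.prod P₂)) :
    let χ := Complex.exp (L ((∫ x, x ∂ R) - ∫ x, x ∂ S) * Complex.I)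
    charFunDual R L = χ * charFunDual S L ∧
      charFunDual P₁ L = χ * charFunDual Q₁ L ∧
      charFunDual P₂ L = χ * charFunDual Q₂ L := by
  have hone (μ : Measure E) [IsProbabilityMeasure μ] : charFunDual μ ((0 : ℝ) • L) = 1 := by
    simp [charFunDual_zero]
  obtain ⟨hRS, hP₁, hP₂⟩ := eq_cexp_mul_of_mul_eq_mul
    (analyticOnNhd_charFunDual_smul hRL) (analyticOnNhd_charFunDual_smul hSL)
    (hasDerivAt_charFunDual_smul_zero (L.integrable_comp hR))
    (hasDerivAt_charFunDual_smul_zero (L.integrable_comp hS))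
    (continuous_charFunDual_smul Q₁ L) (continuous_charFunDual_smul Q₂ L)
    (continuous_charFunDual_smul P₁ L) (continuous_charFunDual_smul P₂ L)
    (hone R) (hone S) (hone Q₁) (hone Q₂) (hone P₁) (hone P₂)
    (fun u v => by rw [add_smul, ← charFunDual_mconv_diag, ← charFunDual_mconv_diag, heq])
  have hexponent : (Complex.I * (∫ x, L x ∂ R : ℝ) - Complex.I * (∫ x, L x ∂ S : ℝ)) * (1 : ℝ) =
      L ((∫ x, x ∂ R) - ∫ x, x ∂ S) * Complex.I := by
    rw [L.integral_comp_comm hR, L.integral_comp_comm hS, map_sub]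
    push_cast
    ring
  have hRS_one := congrFun hRS 1
  have hP₁_one := congrFun hP₁ 1
  have hP₂_one := congrFun hP₂ 1
  simp only [hexponent, one_smul] at hRS_one hP₁_one hP₂_one
  exact ⟨hRS_one, hP₁_one, hP₂_one⟩

theorem stmt2_general
    (hR : Integrable (fun x => x) R) (hS : Integrable (fun x => x) S)
    (hRexp : ∀ L : StrongDual ℝ E, 0 ∈ interior (integrableExpSet L R))
    (hSexp : ∀ L : StrongDual ℝ E, 0 ∈ interior (integrableExpSet L S))
    (heq : mconv (R.map (fun x => (x, x))) (Q₁.prod Q₂) =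
      mconv (S.map (fun x => (x, x))) (P₁.prod P₂)) :
    ∃ m : E, S = R.map (fun x => x - m) ∧
      P₁ = Q₁.map (fun y => y + m) ∧ P₂ = Q₂.map (fun y => y + m) := by
  have hchar (L : StrongDual ℝ E) :=
    charFunDual_eq_of_mconv_diag_eq hR hS (hRexp L) (hSexp L) heq
  set m : E := (∫ x, x ∂ R) - ∫ x, x ∂ S
  have hRS : R = S.map (fun x => x + m) :=
    eq_map_add_const_of_charFunDual_eq fun L => (hchar L).1
  have hSR : S = R.map (fun x => x - m) := calc
    S = (S.map (fun x => x + m)).map (fun x => x - m) := by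
      rw [Measure.map_map (by fun_prop) (by fun_prop)]
      simp [Function.comp_def]
    _ = R.map (fun x => x - m) := by rw [← hRS]
  exact ⟨m, hSR, eq_map_add_const_of_charFunDual_eq fun L => (hchar L).2.1,
    eq_map_add_const_of_charFunDual_eq fun L => (hchar L).2.2⟩

end CharFunDual

section ExponentialMoments

open ProbabilityTheory

variable {d : ℕ} {μ : Measure (Fin d → ℝ)} {ρ : ℝ}

theorem integrableExpSet_eq_univ_of_memM (h : memM μ ρ) (L : StrongDual ℝ (Fin d → ℝ)) :
    integrableExpSet L μ = Set.univ := by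
  refine Set.eq_univ_of_forall fun t => ?_
  obtain ⟨A, B, -, -, hAB⟩ := h
  have hcoord (x : Fin d → ℝ) :
      t * L x = ∑ a, (t * L fun j => if a = j then 1 else 0) * x a := by
    have hL := L.toLinearMap.pi_apply_eq_sum_univ x
    simp only [ContinuousLinearMap.coe_coe, smul_eq_mul] at hL
    rw [hL, Finset.mul_sum]
    exact Finset.sum_congr rfl fun a _ => by ring
  refine ⟨by fun_prop, ?_⟩
  rw [hasFiniteIntegral_iff_ofReal (ae_of_all _ fun x => (Real.exp_pos _).le)]
  rw [lintegral_congr fun x => by rw [hcoord x]]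
  exact (hAB _).trans_lt ENNReal.ofReal_lt_top

theorem zero_mem_interior_integrableExpSet_of_memM (h : memM μ ρ)
    (L : StrongDual ℝ (Fin d → ℝ)) : 0 ∈ interior (integrableExpSet L μ) := by
  simp [integrableExpSet_eq_univ_of_memM h]

theorem integrable_id_of_memM (h : memM μ ρ) : Integrable (fun x => x) μ :=
  Integrable.of_eval fun a => integrable_of_mem_interior_integrableExpSet
    (zero_mem_interior_integrableExpSet_of_memM h (ContinuousLinearMap.proj a))

end ExponentialMoments

theorem stmt2 (d1 : ℕ) (hd1 : 1 ≤ d1)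
    (R1 Rt1 : Measure (Fin d1 → ℝ))
    [IsProbabilityMeasure R1] [IsProbabilityMeasure Rt1]
    (ρ : ℝ) (hρ : ρ < 2) (hR1 : memM R1 ρ) (hRt1 : memM Rt1 ρ)
    (Q1 Qt1 Q2 Qt2 : Measure (Fin d1 → ℝ))
    [IsProbabilityMeasure Q1] [IsProbabilityMeasure Qt1]
    [IsProbabilityMeasure Q2] [IsProbabilityMeasure Qt2]
    (heq : mconv (R1.map (fun x => (x, x))) (Q1.prod Q2) =
           mconv (Rt1.map (fun x => (x, x))) (Qt1.prod Qt2)) :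
    ∃ m1 m2 : Fin d1 → ℝ,
      Rt1.map (fun x => (x, x)) =
        (R1.map (fun x => (x, x))).map (fun x => (x.1 - m1, x.2 - m2)) ∧
      Qt1 = Q1.map (fun y => y + m1) ∧
      Qt2 = Q2.map (fun y => y + m2) := by
  obtain ⟨m, rfl, hQ1, hQ2⟩ := stmt2_general (integrable_id_of_memM hR1)
    (integrable_id_of_memM hRt1) (zero_mem_interior_integrableExpSet_of_memM hR1)
    (zero_mem_interior_integrableExpSet_of_memM hRt1) heq
  exact ⟨m, m, map_map_diag R1 (measurable_sub_const m), hQ1, hQ2⟩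

end Stmt2
end

section
/- Let κ ∈ (0, 1), c, T > 0 and τ ≥ 0. Then there exists x₀ > 0 such that the following holds. Define h_κ(x) = c_h · exp(−(√((1 + (x/x₀)²)/2))^{1/(1−κ)}), where c_h > 0 is the constant making h_κ a probability density on ℝ. Let u(x) = c_u · exp(−1/(1 − x²)) · 1_{[−1,1]}(x) with c_u the normalizing constant, and u_b(x) = b·u(bx) for b > 0. Then for every b ≥ 1/x₀ and every probability density ζ on ℝ such that ζ(x) ≤ c · ([y ↦ h_κ(y)·(1 + (y/x₀)²)^τ] * u_b)(x) for all x ∈ ℝ, the moments of ζ satisfy, for every integer j ≥ 1, ∫_ℝ |x|^j · ζ(x) dx ≤ j! · T^j · j^{−κj}; in particular, the characteristic function of ζ belongs to Υ_{κ,T}. -/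
/- STATEMENT 19: for κ ∈ (0,1), c, T > 0, τ ≥ 0, there exists x₀ > 0 such that every
   probability density ζ dominated by c · ([h_κ · (1+(·/x₀)²)^τ] * u_b), b ≥ 1/x₀, has
   moments ∫ |x|^j ζ(x) dx ≤ j! T^j j^{−κj} for all j ≥ 1 (which expresses that its
   characteristic function belongs to Υ_{κ,T}). -/

namespace Stmt19

open MeasureTheory

/-- The unnormalized density exp(−(√((1+(x/x₀)²)/2))^{1/(1−κ)}). -/
noncomputable def Hfun (κ x0 : ℝ) (x : ℝ) : ℝ :=
  Real.exp (-(Real.sqrt ((1 + (x / x0) ^ 2) / 2)) ^ (1 / (1 - κ)))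

/-- h_κ, the normalized version of Hfun. -/
noncomputable def hdens (κ x0 : ℝ) (x : ℝ) : ℝ :=
  (∫ y, Hfun κ x0 y)⁻¹ * Hfun κ x0 x

/-- The unnormalized bump exp(−1/(1−x²)) on (−1,1). -/
noncomputable def Ufun (x : ℝ) : ℝ :=
  Set.indicator (Set.Ioo (-1 : ℝ) 1) (fun y => Real.exp (-1 / (1 - y ^ 2))) x

/-- u, the normalized bump density. -/
noncomputable def udens (x : ℝ) : ℝ := (∫ y, Ufun y)⁻¹ * Ufun x

/-- u_b(x) = b u(bx). -/
noncomputable def ub (b x : ℝ) : ℝ := b * udens (b * x)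

/-- Convolution of two functions on ℝ. -/
noncomputable def fconv (f g : ℝ → ℝ) (x : ℝ) : ℝ := ∫ y, f y * g (x - y)

/-! Since `b ≥ 1 / x₀`, the kernel `ub b (x - y)` vanishes unless `|x| ≤ |y| + x₀`, so moving
`|x| ^ j` inside the convolution bounds the `j`-th moment of `ζ` by `c` times the shifted moment
`∫ (|y| + x₀) ^ j` of the envelope `h_κ(y) (1 + (y / x₀)²) ^ τ`, which scales as `x₀ ^ j`. At scale
`1`, half of the exponent `w ^ (1 / (1 - κ))`, where `w = √((1 + t²) / 2)`, keeps the envelope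
integrable, and the other half beats `w ^ j` at a cost of order
`B ^ j * j ^ ((1 - κ) j) ≤ (B e) ^ j * j! * j ^ (-κ j)`. All constants are thus of the form `C ^ j`,
and the choice `x₀ = T / C` turns them into `T ^ j`. -/

lemma rpow_mul_exp_neg_mul_le {v s b : ℝ} (hv : 0 ≤ v) (hs : 0 ≤ s) (hb : 0 < b) :
    v ^ s * Real.exp (-(b * v)) ≤ (s / b) ^ s := by
  rcases hs.eq_or_lt with rfl | hs
  · simpa using mul_nonneg hb.le hv
  have hlin : v ≤ s / b * Real.exp (b * v / s) := by
    calc v = s / b * (b * v / s) := by field_simp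
      _ ≤ s / b * Real.exp (b * v / s) := by
        gcongr
        linarith [Real.add_one_le_exp (b * v / s)]
  rw [Real.exp_neg, ← div_eq_mul_inv, div_le_iff₀ (Real.exp_pos _)]
  calc v ^ s ≤ (s / b * Real.exp (b * v / s)) ^ s := by gcongr
    _ = (s / b) ^ s * Real.exp (b * v) := by
      rw [Real.mul_rpow (by positivity) (by positivity), ← Real.exp_mul, div_mul_cancel₀ _ hs.ne']

lemma rpow_mul_exp_neg_mul_rpow_le {w b p q : ℝ} (hw : 0 ≤ w) (hb : 0 < b) (hp : 0 < p)
    (hq : 0 ≤ q) : w ^ q * Real.exp (-(b * w ^ p)) ≤ (q / p / b) ^ (q / p) := by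
  have h := rpow_mul_exp_neg_mul_le (Real.rpow_nonneg hw p) (div_nonneg hq hp.le) hb
  rwa [← Real.rpow_mul hw, mul_div_cancel₀ q hp.ne'] at h

lemma natCast_pow_self_le_factorial_mul_exp_pow (j : ℕ) :
    (j : ℝ) ^ j ≤ Nat.factorial j * Real.exp 1 ^ j := by
  have h := Real.pow_div_factorial_le_exp (j : ℝ) j.cast_nonneg j
  rwa [div_le_iff₀' (by positivity), ← mul_one (j : ℝ), Real.exp_nat_mul, mul_one] at h

lemma natCast_rpow_one_sub_mul_self_le {j : ℕ} (hj : 1 ≤ j) (κ : ℝ) :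
    (j : ℝ) ^ ((1 - κ) * j) ≤
      Nat.factorial j * Real.exp 1 ^ j * (j : ℝ) ^ (-(κ * (j : ℝ))) := by
  have hj0 : (0 : ℝ) < j := by exact_mod_cast hj
  rw [show (1 - κ) * (j : ℝ) = j + -(κ * j) by ring, Real.rpow_add hj0, Real.rpow_natCast]
  gcongr
  exact natCast_pow_self_le_factorial_mul_exp_pow j

/-- The function `√((1 + t²) / 2)`, in which the exponent of `h_κ` is a pure power. It is comparable
to `1 + |t|`. -/
noncomputable def weight (t : ℝ) : ℝ := Real.sqrt ((1 + t ^ 2) / 2)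

lemma weight_nonneg (t : ℝ) : 0 ≤ weight t := Real.sqrt_nonneg _

lemma two_mul_weight_sq (t : ℝ) : 2 * weight t ^ 2 = 1 + t ^ 2 := by
  rw [weight, Real.sq_sqrt (by positivity)]
  ring

lemma continuous_weight : Continuous weight := by
  unfold weight
  fun_prop

lemma abs_add_one_le_two_mul_weight (t : ℝ) : |t| + 1 ≤ 2 * weight t := by
  refine le_of_sq_le_sq ?_ (mul_nonneg zero_le_two (weight_nonneg t))
  nlinarith [two_mul_weight_sq t, sq_nonneg (|t| - 1), sq_abs t]

lemma one_add_sq_rpow_eq (s t : ℝ) : (1 + t ^ 2) ^ s = 2 ^ s * weight t ^ (2 * s) := by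
  rw [Real.rpow_mul (weight_nonneg t), Real.rpow_two,
    ← Real.mul_rpow zero_le_two (sq_nonneg _), two_mul_weight_sq]

lemma one_add_sq_rpow_mul_exp_neg_le {b p s : ℝ} (hb : 0 < b) (hp : 0 < p) (hs : 0 ≤ s) (t : ℝ) :
    (1 + t ^ 2) ^ s * Real.exp (-(b * weight t ^ p)) ≤
      2 ^ s * (2 * s / p / b) ^ (2 * s / p) := by
  rw [one_add_sq_rpow_eq, mul_assoc]
  gcongr
  exact rpow_mul_exp_neg_mul_rpow_le (weight_nonneg t) hb hp (by positivity)

lemma continuous_one_add_sq_rpow (τ : ℝ) : Continuous fun t : ℝ => (1 + t ^ 2) ^ τ :=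
  Continuous.rpow_const (by fun_prop) fun t => Or.inl (by positivity)

lemma continuous_weight_rpow {p : ℝ} (hp : 0 ≤ p) : Continuous fun t => weight t ^ p :=
  continuous_weight.rpow_const fun _ => Or.inr hp

lemma integrable_one_add_sq_rpow_mul_exp_neg (τ : ℝ) {b p : ℝ} (hb : 0 < b) (hp : 0 < p) :
    Integrable fun t => (1 + t ^ 2) ^ τ * Real.exp (-(b * weight t ^ p)) := by
  have hcont : Continuous fun t => (1 + t ^ 2) ^ τ * Real.exp (-(b * weight t ^ p)) :=
    (continuous_one_add_sq_rpow τ).mul ((continuous_weight_rpow hp.le).const_mul b).neg.rexp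
  set s := |τ| + 1
  refine (integrable_inv_one_add_sq.const_mul (2 ^ s * (2 * s / p / b) ^ (2 * s / p))).mono'
    hcont.aestronglyMeasurable (ae_of_all _ fun t => ?_)
  have ht : (0 : ℝ) < 1 + t ^ 2 := by positivity
  rw [Real.norm_of_nonneg (by positivity), ← div_eq_mul_inv, le_div_iff₀ ht]
  calc (1 + t ^ 2) ^ τ * Real.exp (-(b * weight t ^ p)) * (1 + t ^ 2)
      = (1 + t ^ 2) ^ (τ + 1) * Real.exp (-(b * weight t ^ p)) := by
        rw [Real.rpow_add_one ht.ne']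
        ring
    _ ≤ (1 + t ^ 2) ^ s * Real.exp (-(b * weight t ^ p)) := by
        gcongr
        · linarith [sq_nonneg t]
        · linarith [le_abs_self τ]
    _ ≤ 2 ^ s * (2 * s / p / b) ^ (2 * s / p) :=
        one_add_sq_rpow_mul_exp_neg_le hb hp (by positivity) t

lemma Ufun_eq_zero {x : ℝ} (hx : 1 ≤ |x|) : Ufun x = 0 :=
  Set.indicator_of_notMem (fun h : x ∈ Set.Ioo (-1) 1 => hx.not_gt (abs_lt.2 h)) _

lemma Ufun_eq_expNegInvGlue (x : ℝ) : Ufun x = expNegInvGlue (1 - x ^ 2) := by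
  rcases lt_or_ge |x| 1 with hx | hx
  · have h : 0 < 1 - x ^ 2 := sub_pos.2 ((sq_lt_one_iff_abs_lt_one x).2 hx)
    rw [Ufun, Set.indicator_of_mem (Set.mem_Ioo.2 (abs_lt.1 hx)),
      expNegInvGlue, if_neg h.not_ge, neg_div, one_div]
  · rw [Ufun_eq_zero hx,
      expNegInvGlue.zero_of_nonpos (sub_nonpos.2 ((one_le_sq_iff_one_le_abs x).2 hx))]

lemma Ufun_nonneg (x : ℝ) : 0 ≤ Ufun x := by
  rw [Ufun_eq_expNegInvGlue]
  exact expNegInvGlue.nonneg _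

lemma continuous_Ufun : Continuous Ufun := by
  simp_rw [funext Ufun_eq_expNegInvGlue]
  exact (expNegInvGlue.contDiff (n := 0)).continuous.comp (by fun_prop)

lemma hasCompactSupport_Ufun : HasCompactSupport Ufun :=
  .of_support_subset_isCompact isCompact_Icc <|
    Set.support_indicator_subset.trans Set.Ioo_subset_Icc_self

lemma integrable_Ufun : Integrable Ufun :=
  continuous_Ufun.integrable_of_hasCompactSupport hasCompactSupport_Ufun

lemma integral_Ufun_pos : 0 < ∫ x, Ufun x :=
  continuous_Ufun.integral_pos_of_hasCompactSupport_nonneg_nonzero hasCompactSupport_Ufun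
    Ufun_nonneg (x := 0) (by simp [Ufun_eq_expNegInvGlue])

lemma ub_nonneg {b : ℝ} (hb : 0 ≤ b) (x : ℝ) : 0 ≤ ub b x :=
  mul_nonneg hb (mul_nonneg (inv_nonneg.2 integral_Ufun_pos.le) (Ufun_nonneg _))

lemma abs_lt_inv_of_ub_ne_zero {b x : ℝ} (hb : 0 < b) (hx : ub b x ≠ 0) : |x| < b⁻¹ := by
  contrapose! hx
  have h : 1 ≤ |b * x| := by
    rwa [abs_mul, abs_of_pos hb, ← inv_le_iff_one_le_mul₀' hb]
  rw [ub, udens, Ufun_eq_zero h, mul_zero, mul_zero]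

lemma integrable_ub {b : ℝ} (hb : b ≠ 0) : Integrable (ub b) :=
  ((integrable_Ufun.const_mul _).comp_mul_left' hb).const_mul b

lemma integral_udens : ∫ x, udens x = 1 := by
  simp only [udens, integral_const_mul]
  exact inv_mul_cancel₀ integral_Ufun_pos.ne'

lemma integral_ub {b : ℝ} (hb : 0 < b) : ∫ x, ub b x = 1 := by
  simp only [ub, integral_const_mul]
  rw [Measure.integral_comp_mul_left, integral_udens, abs_of_pos (inv_pos.2 hb), smul_eq_mul,
    mul_one, mul_inv_cancel₀ hb.ne']

section Convolution

variable {f k g G ζ : ℝ → ℝ} {c : ℝ}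

lemma fconv_eq_convolution (f k : ℝ → ℝ) :
    fconv f k = convolution f k (ContinuousLinearMap.mul ℝ ℝ) volume := rfl

lemma integrable_fconv (hf : Integrable f) (hk : Integrable k) : Integrable (fconv f k) := by
  rw [fconv_eq_convolution]
  exact hf.integrable_convolution _ hk

lemma integral_fconv (hf : Integrable f) (hk : Integrable k) :
    ∫ x, fconv f k x = (∫ x, f x) * ∫ x, k x := by
  rw [fconv_eq_convolution]
  exact integral_convolution _ hf hk

-- Only almost everywhere: where the right-hand convolution diverges, its value is the junk `0`.
lemma ae_mul_fconv_le_fconv_mul (hg : ∀ x, 0 ≤ g x) (hf : ∀ y, 0 ≤ f y) (hk : ∀ z, 0 ≤ k z)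
    (hgG : ∀ x y, k (x - y) ≠ 0 → g x ≤ G y) (hGf : Integrable fun y => G y * f y)
    (hk_int : Integrable k) :
    ∀ᵐ x, g x * fconv f k x ≤ fconv (fun y => G y * f y) k x := by
  filter_upwards [hGf.ae_convolution_exists (ContinuousLinearMap.mul ℝ ℝ) hk_int] with x hx
  rw [fconv, fconv, ← integral_const_mul]
  refine integral_mono_of_nonneg
    (ae_of_all _ fun y => mul_nonneg (hg x) (mul_nonneg (hf y) (hk _))) hx
    (ae_of_all _ fun y => ?_)
  rcases eq_or_ne (k (x - y)) 0 with h0 | h0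
  · simp [h0]
  · calc g x * (f y * k (x - y)) ≤ G y * (f y * k (x - y)) :=
          mul_le_mul_of_nonneg_right (hgG x y h0) (mul_nonneg (hf y) (hk _))
      _ = G y * f y * k (x - y) := (mul_assoc _ _ _).symm

lemma integrable_mul_and_integral_mul_le_of_le_fconv (hc : 0 ≤ c) (hg : ∀ x, 0 ≤ g x)
    (hf : ∀ y, 0 ≤ f y) (hk : ∀ z, 0 ≤ k z) (hgG : ∀ x y, k (x - y) ≠ 0 → g x ≤ G y)
    (hGf : Integrable fun y => G y * f y) (hk_int : Integrable k)
    (hgζ : AEStronglyMeasurable (fun x => g x * ζ x)) (hζ0 : ∀ x, 0 ≤ ζ x)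
    (hζ : ∀ x, ζ x ≤ c * fconv f k x) :
    Integrable (fun x => g x * ζ x) ∧
      ∫ x, g x * ζ x ≤ c * ((∫ y, G y * f y) * ∫ z, k z) := by
  have hle : ∀ᵐ x, g x * ζ x ≤ c * fconv (fun y => G y * f y) k x := by
    filter_upwards [ae_mul_fconv_le_fconv_mul hg hf hk hgG hGf hk_int] with x hx
    calc g x * ζ x ≤ g x * (c * fconv f k x) := mul_le_mul_of_nonneg_left (hζ x) (hg x)
      _ = c * (g x * fconv f k x) := by ring
      _ ≤ c * fconv (fun y => G y * f y) k x := by gcongr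
  have hbound : Integrable fun x => c * fconv (fun y => G y * f y) k x :=
    (integrable_fconv hGf hk_int).const_mul c
  have hint : Integrable fun x => g x * ζ x := by
    refine hbound.mono' hgζ (hle.mono fun x hx => ?_)
    rwa [Real.norm_of_nonneg (mul_nonneg (hg x) (hζ0 x))]
  refine ⟨hint, (integral_mono_ae hint hbound hle).trans_eq ?_⟩
  rw [integral_const_mul, integral_fconv hGf hk_int]

end Convolution

/-- The function `h_κ(y) (1 + (y / x₀)²) ^ τ`, whose mollification dominates the densities `ζ`. -/
noncomputable def envelope (κ τ x0 y : ℝ) : ℝ := hdens κ x0 y * (1 + (y / x0) ^ 2) ^ τ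

lemma Hfun_eq_Hfun_one (κ x0 y : ℝ) : Hfun κ x0 y = Hfun κ 1 (y / x0) := by
  simp only [Hfun, div_one]

lemma Hfun_one_eq_exp_mul_exp (κ t : ℝ) :
    Hfun κ 1 t = Real.exp (-(2⁻¹ * weight t ^ (1 / (1 - κ)))) *
      Real.exp (-(2⁻¹ * weight t ^ (1 / (1 - κ)))) := by
  rw [← Real.exp_add, Hfun, div_one, ← weight]
  ring_nf

lemma integral_Hfun_nonneg (κ x0 : ℝ) : 0 ≤ ∫ y, Hfun κ x0 y :=
  integral_nonneg fun _ => (Real.exp_pos _).le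

lemma hdens_nonneg (κ x0 y : ℝ) : 0 ≤ hdens κ x0 y :=
  mul_nonneg (inv_nonneg.2 (integral_Hfun_nonneg κ _)) (Real.exp_pos _).le

lemma hdens_eq_inv_mul_hdens_one {x0 : ℝ} (hx0 : 0 < x0) (κ y : ℝ) :
    hdens κ x0 y = x0⁻¹ * hdens κ 1 (y / x0) := by
  simp only [hdens, Hfun_eq_Hfun_one κ x0, Measure.integral_comp_div (Hfun κ 1), abs_of_pos hx0,
    smul_eq_mul, mul_inv, mul_assoc]

lemma envelope_nonneg (κ τ x0 y : ℝ) : 0 ≤ envelope κ τ x0 y :=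
  mul_nonneg (hdens_nonneg κ x0 y) (by positivity)

lemma shifted_pow_mul_envelope_eq {x0 : ℝ} (hx0 : 0 < x0) (κ τ : ℝ) (j : ℕ) (y : ℝ) :
    (|y| + x0) ^ j * envelope κ τ x0 y =
      x0 ^ j * (x0⁻¹ * ((|y / x0| + 1) ^ j * envelope κ τ 1 (y / x0))) := by
  have h : |y| + x0 = x0 * (|y / x0| + 1) := by
    rw [abs_div, abs_of_pos hx0]
    field_simp
  rw [h, mul_pow, envelope, envelope, hdens_eq_inv_mul_hdens_one hx0, div_one]
  ring

lemma integral_shifted_pow_mul_envelope {x0 : ℝ} (hx0 : 0 < x0) (κ τ : ℝ) (j : ℕ) :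
    ∫ y, (|y| + x0) ^ j * envelope κ τ x0 y =
      x0 ^ j * ∫ t, (|t| + 1) ^ j * envelope κ τ 1 t := by
  simp only [shifted_pow_mul_envelope_eq hx0, integral_const_mul]
  rw [Measure.integral_comp_div (fun t => (|t| + 1) ^ j * envelope κ τ 1 t), abs_of_pos hx0,
    smul_eq_mul, inv_mul_cancel_left₀ hx0.ne']

/-- An integrable function which, up to a factor depending on `j` alone, dominates all the products
`(|t| + 1) ^ j * envelope κ τ 1 t`: half of the exponent of `h_κ` has been given up. -/
noncomputable def majorant (κ τ t : ℝ) : ℝ :=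
  (∫ y, Hfun κ 1 y)⁻¹ * ((1 + t ^ 2) ^ τ * Real.exp (-(2⁻¹ * weight t ^ (1 / (1 - κ)))))

lemma majorant_nonneg (κ τ t : ℝ) : 0 ≤ majorant κ τ t :=
  mul_nonneg (inv_nonneg.2 (integral_Hfun_nonneg κ _)) (by positivity)

section Moments

variable {κ : ℝ}

lemma integrable_majorant (hκ : κ < 1) (τ : ℝ) : Integrable (majorant κ τ) :=
  (integrable_one_add_sq_rpow_mul_exp_neg τ (by norm_num)
    (one_div_pos.2 (sub_pos.2 hκ))).const_mul _

lemma shifted_pow_mul_exp_neg_le (hκ : κ < 1) (j : ℕ) (t : ℝ) :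
    (|t| + 1) ^ j * Real.exp (-(2⁻¹ * weight t ^ (1 / (1 - κ)))) ≤
      (2 * (2 * (1 - κ)) ^ (1 - κ)) ^ j * (j : ℝ) ^ ((1 - κ) * j) := by
  have hκ' : 0 < 1 - κ := sub_pos.2 hκ
  have hpeak : weight t ^ j * Real.exp (-(2⁻¹ * weight t ^ (1 / (1 - κ)))) ≤
      (2 * (1 - κ) * j) ^ ((1 - κ) * j) := by
    have h := rpow_mul_exp_neg_mul_rpow_le (weight_nonneg t) (b := 2⁻¹) (by norm_num)
      (one_div_pos.2 hκ') j.cast_nonneg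
    rw [Real.rpow_natCast] at h
    convert h using 2 <;> field_simp
  calc (|t| + 1) ^ j * Real.exp (-(2⁻¹ * weight t ^ (1 / (1 - κ))))
      ≤ (2 * weight t) ^ j * Real.exp (-(2⁻¹ * weight t ^ (1 / (1 - κ)))) := by
        gcongr
        exact abs_add_one_le_two_mul_weight t
    _ = 2 ^ j * (weight t ^ j * Real.exp (-(2⁻¹ * weight t ^ (1 / (1 - κ))))) := by ring
    _ ≤ 2 ^ j * (2 * (1 - κ) * j) ^ ((1 - κ) * j) := by gcongr
    _ = (2 * (2 * (1 - κ)) ^ (1 - κ)) ^ j * (j : ℝ) ^ ((1 - κ) * j) := by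
        rw [Real.mul_rpow (by positivity) j.cast_nonneg,
          Real.rpow_mul_natCast (by positivity), mul_pow]
        ring

lemma shifted_pow_mul_envelope_one_le (hκ : κ < 1) (τ : ℝ) (j : ℕ) (t : ℝ) :
    (|t| + 1) ^ j * envelope κ τ 1 t ≤
      (2 * (2 * (1 - κ)) ^ (1 - κ)) ^ j * (j : ℝ) ^ ((1 - κ) * j) * majorant κ τ t := by
  calc (|t| + 1) ^ j * envelope κ τ 1 t
      = (|t| + 1) ^ j * Real.exp (-(2⁻¹ * weight t ^ (1 / (1 - κ)))) * majorant κ τ t := by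
        rw [envelope, hdens, Hfun_one_eq_exp_mul_exp, majorant, div_one]
        ring
    _ ≤ _ := mul_le_mul_of_nonneg_right (shifted_pow_mul_exp_neg_le hκ j t)
        (majorant_nonneg κ τ t)

lemma measurable_envelope (κ τ x0 : ℝ) : Measurable (envelope κ τ x0) := by
  unfold envelope hdens Hfun
  fun_prop

lemma integrable_shifted_pow_mul_envelope_one (hκ : κ < 1) (τ : ℝ) (j : ℕ) :
    Integrable fun t => (|t| + 1) ^ j * envelope κ τ 1 t := by
  have hmeas : Measurable fun t => (|t| + 1) ^ j * envelope κ τ 1 t :=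
    (by fun_prop : Measurable fun t : ℝ => (|t| + 1) ^ j).mul (measurable_envelope κ τ 1)
  have hnonneg (t : ℝ) : 0 ≤ (|t| + 1) ^ j * envelope κ τ 1 t :=
    mul_nonneg (by positivity) (envelope_nonneg κ τ 1 t)
  exact ((integrable_majorant hκ τ).const_mul _).mono' hmeas.aestronglyMeasurable
    (ae_of_all _ fun t => (Real.norm_of_nonneg (hnonneg t)).trans_le
      (shifted_pow_mul_envelope_one_le hκ τ j t))

lemma integrable_shifted_pow_mul_envelope (hκ : κ < 1) (τ : ℝ) {x0 : ℝ} (hx0 : 0 < x0) (j : ℕ) :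
    Integrable fun y => (|y| + x0) ^ j * envelope κ τ x0 y := by
  simp only [shifted_pow_mul_envelope_eq hx0]
  have h := (integrable_shifted_pow_mul_envelope_one hκ τ j).comp_div hx0.ne'
  exact (h.const_mul _).const_mul _

lemma exists_mul_integral_shifted_pow_mul_envelope_one_le (hκ : κ < 1) (τ : ℝ) {c : ℝ}
    (hc : 0 ≤ c) :
    ∃ C : ℝ, 0 < C ∧ ∀ j : ℕ, 1 ≤ j → c * ∫ t, (|t| + 1) ^ j * envelope κ τ 1 t ≤
      Nat.factorial j * C ^ j * (j : ℝ) ^ (-(κ * (j : ℝ))) := by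
  set A := ∫ t, majorant κ τ t
  set B := 2 * (2 * (1 - κ)) ^ (1 - κ)
  have hB : 0 < B := mul_pos two_pos (Real.rpow_pos_of_pos (mul_pos two_pos (sub_pos.2 hκ)) _)
  set K := max (c * A) 1
  have hK : 1 ≤ K := le_max_right _ _
  have hC : 0 < K * B * Real.exp 1 :=
    mul_pos (mul_pos (zero_lt_one.trans_le hK) hB) (Real.exp_pos 1)
  refine ⟨K * B * Real.exp 1, hC, fun j hj => ?_⟩
  have hmoment : ∫ t, (|t| + 1) ^ j * envelope κ τ 1 t ≤ B ^ j * (j : ℝ) ^ ((1 - κ) * j) * A := by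
    rw [← integral_const_mul]
    exact integral_mono (integrable_shifted_pow_mul_envelope_one hκ τ j)
      ((integrable_majorant hκ τ).const_mul _) (shifted_pow_mul_envelope_one_le hκ τ j)
  have hcA : c * A ≤ K ^ j := (le_max_left _ _).trans (le_self_pow₀ hK (by omega))
  calc c * ∫ t, (|t| + 1) ^ j * envelope κ τ 1 t
      ≤ c * (B ^ j * (j : ℝ) ^ ((1 - κ) * j) * A) := by gcongr
    _ = c * A * (B ^ j * (j : ℝ) ^ ((1 - κ) * j)) := by ring
    _ ≤ K ^ j * (B ^ j *
          (Nat.factorial j * Real.exp 1 ^ j * (j : ℝ) ^ (-(κ * (j : ℝ))))) := by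
        gcongr
        exact natCast_rpow_one_sub_mul_self_le hj κ
    _ = Nat.factorial j * (K * B * Real.exp 1) ^ j * (j : ℝ) ^ (-(κ * (j : ℝ))) := by
        simp only [mul_pow]
        ring

end Moments

lemma integrable_and_integral_pow_abs_mul_le_of_le_fconv_ub {κ τ x0 b c : ℝ} (hκ : κ < 1)
    (hx0 : 0 < x0) (hb : 1 / x0 ≤ b) (hc : 0 ≤ c) {ζ : ℝ → ℝ} (hζm : AEStronglyMeasurable ζ)
    (hζ0 : ∀ x, 0 ≤ ζ x) (hζ : ∀ x, ζ x ≤ c * fconv (envelope κ τ x0) (ub b) x) (j : ℕ) :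
    Integrable (fun x => |x| ^ j * ζ x) ∧
      ∫ x, |x| ^ j * ζ x ≤ x0 ^ j * (c * ∫ t, (|t| + 1) ^ j * envelope κ τ 1 t) := by
  have hb0 : 0 < b := (one_div_pos.2 hx0).trans_le hb
  have hsupport (x y : ℝ) (hxy : ub b (x - y) ≠ 0) : |x| ^ j ≤ (|y| + x0) ^ j := by
    have hclose : |x - y| < x0 :=
      (abs_lt_inv_of_ub_ne_zero hb0 hxy).trans_le (inv_le_of_inv_le₀ hx0 (by rwa [← one_div]))
    gcongr
    linarith [abs_sub_abs_le_abs_sub x y]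
  have h := integrable_mul_and_integral_mul_le_of_le_fconv hc (fun x => by positivity)
    (envelope_nonneg κ τ x0) (ub_nonneg hb0.le) hsupport
    (integrable_shifted_pow_mul_envelope hκ τ hx0 j) (integrable_ub hb0.ne')
    ((by fun_prop : Measurable fun x : ℝ => |x| ^ j).aestronglyMeasurable.mul hζm) hζ0 hζ
  rwa [integral_ub hb0, mul_one, integral_shifted_pow_mul_envelope hx0, mul_left_comm] at h

theorem stmt19_general {κ c T : ℝ} (hκ : κ < 1) (hc : 0 ≤ c) (hT : 0 < T) (τ : ℝ) :
    ∃ x0 : ℝ, 0 < x0 ∧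
      ∀ b : ℝ, 1 / x0 ≤ b →
      ∀ ζ : ℝ → ℝ, AEStronglyMeasurable ζ → (∀ x, 0 ≤ ζ x) →
        (∀ x : ℝ, ζ x ≤
          c * fconv (fun y => hdens κ x0 y * (1 + (y / x0) ^ 2) ^ τ) (ub b) x) →
        ∀ j : ℕ, 1 ≤ j →
          Integrable (fun x => |x| ^ j * ζ x) ∧
          (∫ x, |x| ^ j * ζ x) ≤
            (Nat.factorial j : ℝ) * T ^ j * (j : ℝ) ^ (-(κ * (j : ℝ))) := by
  obtain ⟨C, hC, hmoment⟩ := exists_mul_integral_shifted_pow_mul_envelope_one_le hκ τ hc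
  have hx0 : 0 < T / C := div_pos hT hC
  refine ⟨T / C, hx0, fun b hb ζ hζm hζ0 hζ j hj => ?_⟩
  obtain ⟨hint, hle⟩ :=
    integrable_and_integral_pow_abs_mul_le_of_le_fconv_ub hκ hx0 hb hc hζm hζ0 hζ j
  refine ⟨hint, hle.trans ?_⟩
  calc (T / C) ^ j * (c * ∫ t, (|t| + 1) ^ j * envelope κ τ 1 t)
      ≤ (T / C) ^ j * (Nat.factorial j * C ^ j * (j : ℝ) ^ (-(κ * (j : ℝ)))) :=
        mul_le_mul_of_nonneg_left (hmoment j hj) (by positivity)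
    _ = Nat.factorial j * (T / C * C) ^ j * (j : ℝ) ^ (-(κ * (j : ℝ))) := by
        rw [mul_pow]
        ring
    _ = Nat.factorial j * T ^ j * (j : ℝ) ^ (-(κ * (j : ℝ))) := by
        rw [div_mul_cancel₀ T hC.ne']

theorem stmt19 (κ : ℝ) (hκ0 : 0 < κ) (hκ1 : κ < 1) (c T : ℝ) (hc : 0 < c) (hT : 0 < T)
    (τ : ℝ) (hτ : 0 ≤ τ) :
    ∃ x0 : ℝ, 0 < x0 ∧
      ∀ b : ℝ, 1 / x0 ≤ b →
      ∀ ζ : ℝ → ℝ, Measurable ζ → (∀ x, 0 ≤ ζ x) → (∫ x, ζ x) = 1 →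
        (∀ x : ℝ, ζ x ≤
          c * fconv (fun y => hdens κ x0 y * (1 + (y / x0) ^ 2) ^ τ) (ub b) x) →
        ∀ j : ℕ, 1 ≤ j →
          Integrable (fun x => |x| ^ j * ζ x) ∧
          (∫ x, |x| ^ j * ζ x) ≤
            (Nat.factorial j : ℝ) * T ^ j * (j : ℝ) ^ (-(κ * (j : ℝ))) := by
  obtain ⟨x0, hx0, hmoment⟩ := stmt19_general hκ1 hc.le hT τ
  exact ⟨x0, hx0, fun b hb ζ hζm hζ0 _ => hmoment b hb ζ hζm.aestronglyMeasurable hζ0⟩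

end Stmt19
end
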